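/- arXiv:2312.15303 — 7 statements merged into one kernel-verified Lean document; each statement's English description precedes it below -/
import Mathlib

section
/- For every real α with 0 < |α| < 2, the moment generating function of η_log satisfies ∫_ℝ e^{α·s}·η_log(s) ds = (24/(π²·α·(α+2)))·( 2/α + 2^α·Γ(−α/2)·Γ(1/2)/Γ((1−α)/2) ), where Γ is the real Gamma function. -/
open MeasureTheory

/-- The limiting density of the logarithm of smallest denominators. -/
noncomputable def etaLog (s : ℝ) : ℝ :=
  if s ≤ 0 then 6 / Real.pi ^ 2 * Real.exp (2 * s)
  else if s ≤ Real.log 2 then 6 / Real.pi ^ 2 * (-Real.exp (2 * s) + 2 + 4 * s)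
  else 6 / Real.pi ^ 2 * (-Real.exp (2 * s) + 2
    + 2 * Real.exp (2 * s) * Real.sqrt (1 / 4 - Real.exp (-2 * s))
    - 4 * Real.log (1 / 2 + Real.sqrt (1 / 4 - Real.exp (-2 * s))))


lemma beta_integrableOn_aux {p q : ℝ} (hp : 0 < p) (hq : 0 < q) :
    IntegrableOn (fun t : ℝ => t ^ (p - 1) * (1 - t) ^ (q - 1)) (Set.Ioo 0 1) ∧
    ∫ t in Set.Ioo (0:ℝ) 1, t ^ (p - 1) * (1 - t) ^ (q - 1) =
      Real.Gamma p * Real.Gamma q / Real.Gamma (p + q) := by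
  have hc := Complex.betaIntegral_convergent (u := p) (v := q) (by simpa) (by simpa)
  rw [intervalIntegrable_iff_integrableOn_Ioo_of_le (by simp)] at hc
  have heq : ∀ t ∈ Set.Ioo (0:ℝ) 1,
      ((t:ℂ) ^ ((p:ℂ) - 1) * (1 - (t:ℂ)) ^ ((q:ℂ) - 1)) =
        ((t ^ (p - 1) * (1 - t) ^ (q - 1) : ℝ) : ℂ) := by
    intro t ht
    rw [Complex.ofReal_mul, Complex.ofReal_cpow ht.1.le, Complex.ofReal_cpow (by linarith [ht.2])]
    push_cast
    rfl
  have hc2 := hc.congr_fun heq measurableSet_Ioo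
  refine ⟨by simpa [IntegrableOn] using hc2.re, ?_⟩
  have h1 := Complex.betaIntegral_eq_Gamma_mul_div p q (by simpa) (by simpa)
  rw [Complex.betaIntegral, intervalIntegral.integral_of_le (by simp),
    integral_Ioc_eq_integral_Ioo, setIntegral_congr_fun measurableSet_Ioo heq,
    integral_complex_ofReal, ← Complex.ofReal_add, Complex.Gamma_ofReal, Complex.Gamma_ofReal,
    Complex.Gamma_ofReal] at h1
  exact_mod_cast h1

/-- change of variables -/
lemma tail_beta_aux {α : ℝ} (hα : α < 2) :
    IntegrableOn (fun s : ℝ => Real.exp (α * s) *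
      (Real.exp (-2 * s) / Real.sqrt (1 / 4 - Real.exp (-2 * s)))) (Set.Ioi (Real.log 2)) ∧
    ∫ s in Set.Ioi (Real.log 2), Real.exp (α * s) *
      (Real.exp (-2 * s) / Real.sqrt (1 / 4 - Real.exp (-2 * s))) =
      2 ^ α / 4 * (Real.Gamma (1 - α / 2) * Real.Gamma (1 / 2) / Real.Gamma (3 / 2 - α / 2)) := by
  have hb := beta_integrableOn_aux (p := 1 - α / 2) (q := 1 / 2) (by linarith) (by norm_num)
  have himg : (fun s : ℝ => 4 * Real.exp (-2 * s)) '' Set.Ioi (Real.log 2) = Set.Ioo 0 1 := by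
    ext t
    simp only [Set.mem_image, Set.mem_Ioi, Set.mem_Ioo]
    constructor
    · rintro ⟨s, hs, rfl⟩
      refine ⟨by positivity, ?_⟩
      have : Real.exp (-2 * s) < Real.exp (-2 * Real.log 2) := Real.exp_lt_exp.2 (by linarith)
      rw [show -2 * Real.log 2 = - Real.log 4 by
        rw [show (4:ℝ) = 2 ^ 2 by norm_num, Real.log_pow]; push_cast; ring, Real.exp_neg,
        Real.exp_log (by norm_num)] at this
      linarith
    · rintro ⟨h0, h1⟩
      refine ⟨- Real.log (t / 4) / 2, ?_, ?_⟩
      · have : Real.log (t / 4) < Real.log (1 / 4) := Real.log_lt_log (by positivity) (by linarith)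
        rw [show (1 / 4 : ℝ) = (2 ^ 2)⁻¹ by norm_num, Real.log_inv, Real.log_pow] at this
        push_cast at this
        linarith
      · rw [show -2 * (-Real.log (t / 4) / 2) = Real.log (t / 4) by ring,
          Real.exp_log (by positivity)]
        ring
  have hd : ∀ s ∈ Set.Ioi (Real.log 2), HasDerivWithinAt (fun s : ℝ => 4 * Real.exp (-2 * s))
      (-8 * Real.exp (-2 * s)) (Set.Ioi (Real.log 2)) s := by
    intro s _
    have := (((hasDerivAt_id s).const_mul (-2)).exp).const_mul 4
    refine (this.congr_deriv ?_).hasDerivWithinAt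
    simp; ring
  have hinj : Set.InjOn (fun s : ℝ => 4 * Real.exp (-2 * s)) (Set.Ioi (Real.log 2)) := by
    intro a _ b _ h
    simp at h
    exact h
  have e1 := integrableOn_image_iff_integrableOn_abs_deriv_smul measurableSet_Ioi hd hinj
    (fun t : ℝ => t ^ (1 - α / 2 - 1) * (1 - t) ^ ((1:ℝ) / 2 - 1))
  have e2 := integral_image_eq_integral_abs_deriv_smul measurableSet_Ioi hd hinj
    (fun t : ℝ => t ^ (1 - α / 2 - 1) * (1 - t) ^ ((1:ℝ) / 2 - 1))
  rw [himg] at e1 e2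
  have key : ∀ s ∈ Set.Ioi (Real.log 2),
      |(-8 * Real.exp (-2 * s))| • ((4 * Real.exp (-2 * s)) ^ (1 - α / 2 - 1) *
        (1 - 4 * Real.exp (-2 * s)) ^ ((1:ℝ) / 2 - 1)) =
      (4 / 2 ^ α) * (Real.exp (α * s) *
      (Real.exp (-2 * s) / Real.sqrt (1 / 4 - Real.exp (-2 * s)))) := by
    intro s hs
    have hm : 4 * Real.exp (-2 * s) ∈ Set.Ioo (0:ℝ) 1 := himg ▸ Set.mem_image_of_mem _ hs
    have h2 : (0:ℝ) < 2 ^ α := by positivity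
    have a1 : (4 * Real.exp (-2 * s)) ^ (1 - α / 2 - 1) = Real.exp (α * s) / 2 ^ α := by
      rw [Real.mul_rpow (by norm_num) (Real.exp_pos _).le, ← Real.exp_mul,
        show (4:ℝ) = 2 ^ (2:ℝ) by norm_num, ← Real.rpow_mul (by norm_num),
        show 2 * (1 - α / 2 - 1) = -α by ring, Real.rpow_neg (by norm_num),
        show -2 * s * (1 - α / 2 - 1) = α * s by ring]
      ring
    have a2 : (1 - 4 * Real.exp (-2 * s)) ^ ((1:ℝ) / 2 - 1) =
        (2 * Real.sqrt (1 / 4 - Real.exp (-2 * s)))⁻¹ := by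
      rw [show ((1:ℝ) / 2 - 1) = - (1 / 2) by norm_num, Real.rpow_neg (by linarith [hm.2]),
        ← Real.sqrt_eq_rpow]
      congr 1
      rw [show 1 - 4 * Real.exp (-2 * s) = 2 ^ 2 * (1 / 4 - Real.exp (-2 * s)) by ring,
        Real.sqrt_mul (by norm_num), Real.sqrt_sq (by norm_num)]
    have hr : 0 < Real.sqrt (1 / 4 - Real.exp (-2 * s)) := Real.sqrt_pos.2 (by linarith [hm.2])
    rw [a1, a2, abs_mul, abs_of_pos (Real.exp_pos _), smul_eq_mul]
    norm_num
    field_simp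
    norm_num
  rw [integrableOn_congr_fun key measurableSet_Ioi] at e1
  rw [setIntegral_congr_fun measurableSet_Ioi key, integral_const_mul, hb.2] at e2
  have h2 : (0:ℝ) < 2 ^ α := by positivity
  constructor
  · have := Integrable.const_mul (e1.1 hb.1) (2 ^ α / 4)
    refine IntegrableOn.congr_fun this (fun s _ => ?_) measurableSet_Ioi
    field_simp
  · rw [show 3 / 2 - α / 2 = 1 - α / 2 + 1 / 2 by ring, e2, ← mul_assoc,
      show (2:ℝ) ^ α / 4 * (4 / 2 ^ α) = 1 by field_simp, one_mul]

noncomputable def etaTail (s : ℝ) : ℝ := -Real.exp (2 * s) + 2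
    + 2 * Real.exp (2 * s) * Real.sqrt (1 / 4 - Real.exp (-2 * s))
    - 4 * Real.log (1 / 2 + Real.sqrt (1 / 4 - Real.exp (-2 * s)))

noncomputable def etaTail' (s : ℝ) : ℝ := 4 - 2 * Real.exp (2 * s)
    + 4 * Real.exp (2 * s) * Real.sqrt (1 / 4 - Real.exp (-2 * s))

lemma exp_two_log_two : Real.exp (2 * Real.log 2) = 4 := by
  rw [mul_comm, Real.exp_mul, Real.exp_log (by norm_num)]; norm_num

lemma exp_neg_two_log_two : Real.exp (-2 * Real.log 2) = 1 / 4 := by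
  rw [show -2 * Real.log 2 = -(2 * Real.log 2) by ring, Real.exp_neg, exp_two_log_two]; norm_num

lemma exp_mul_exp_aux (s : ℝ) : Real.exp (2 * s) * Real.exp (-2 * s) = 1 := by
  rw [← Real.exp_add]; simp

lemma hasDerivAt_exp_aux (a s : ℝ) :
    HasDerivAt (fun s : ℝ => Real.exp (a * s)) (a * Real.exp (a * s)) s := by
  have := ((hasDerivAt_id s).const_mul a).exp
  refine this.congr_deriv ?_
  simp; ring

lemma u_lt_aux {s : ℝ} (hs : Real.log 2 < s) : Real.exp (-2 * s) < 1 / 4 := by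
  rw [← exp_neg_two_log_two]; exact Real.exp_lt_exp.2 (by linarith)

lemma hasDerivAt_r_aux {s : ℝ} (hs : Real.log 2 < s) :
    HasDerivAt (fun s : ℝ => Real.sqrt (1 / 4 - Real.exp (-2 * s)))
      (Real.exp (-2 * s) / Real.sqrt (1 / 4 - Real.exp (-2 * s))) s := by
  have h := ((hasDerivAt_exp_aux (-2) s).const_sub (1 / 4)).sqrt (by linarith [u_lt_aux hs])
  refine h.congr_deriv ?_
  have := u_lt_aux hs
  have hr : 0 < Real.sqrt (1 / 4 - Real.exp (-2 * s)) := Real.sqrt_pos.2 (by linarith)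
  field_simp

lemma hasDerivAt_etaTail {s : ℝ} (hs : Real.log 2 < s) :
    HasDerivAt etaTail (etaTail' s) s := by
  have hu := u_lt_aux hs
  have hr : 0 < Real.sqrt (1 / 4 - Real.exp (-2 * s)) := Real.sqrt_pos.2 (by linarith)
  have hsq := Real.sq_sqrt (show 0 ≤ 1 / 4 - Real.exp (-2 * s) by linarith)
  have hx := exp_mul_exp_aux s
  have h := ((((hasDerivAt_exp_aux 2 s).neg.add_const 2).add
    (((hasDerivAt_exp_aux 2 s).const_mul 2).mul (hasDerivAt_r_aux hs)))).sub
    ((((hasDerivAt_r_aux hs).const_add (1/2)).log (by positivity)).const_mul 4)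
  refine h.congr_deriv ?_
  rw [etaTail']
  generalize Real.sqrt (1 / 4 - Real.exp (-2 * s)) = r at *
  generalize Real.exp (2 * s) = X at *
  generalize hU : Real.exp (-2 * s) = U at *
  have hU' : U = 1 / 4 - r ^ 2 := by linarith
  subst hU'
  have hw : (1 / 2 + r) ≠ 0 := by positivity
  have e : (1 / 4 - r ^ 2) / r / (1 / 2 + r) = (1 / 2 - r) / r := by
    field_simp; ring
  have e2 : 2 * X * ((1 / 4 - r ^ 2) / r) = 2 / r := by
    rw [← mul_div_assoc]; congr 1; linear_combination 2 * hx
  rw [e, e2]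
  field_simp
  ring

lemma hasDerivAt_etaTail' {s : ℝ} (hs : Real.log 2 < s) :
    HasDerivAt etaTail' (2 * etaTail' s + 4 / Real.sqrt (1 / 4 - Real.exp (-2 * s)) - 8) s := by
  have hu := u_lt_aux hs
  have hr : 0 < Real.sqrt (1 / 4 - Real.exp (-2 * s)) := Real.sqrt_pos.2 (by linarith)
  have hx := exp_mul_exp_aux s
  have h := (((hasDerivAt_exp_aux 2 s).const_mul 2).const_sub 4).add
    (((hasDerivAt_exp_aux 2 s).const_mul 4).mul (hasDerivAt_r_aux hs))
  refine h.congr_deriv ?_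
  rw [etaTail']
  generalize Real.sqrt (1 / 4 - Real.exp (-2 * s)) = r at *
  generalize Real.exp (2 * s) = X at *
  generalize hU : Real.exp (-2 * s) = U at *
  have e2 : 4 * X * (U / r) = 4 / r := by
    field_simp; linear_combination hx
  rw [e2]
  ring

lemma tail_bounds {s : ℝ} (hs : Real.log 2 ≤ s) :
    |etaTail s| ≤ 24 * Real.exp (-2 * s) ∧ |etaTail' s| ≤ 16 * Real.exp (-2 * s) ∧
    |2 * Real.sqrt (1 / 4 - Real.exp (-2 * s)) - 1| ≤ 4 * Real.exp (-2 * s) := by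
  have hu : Real.exp (-2 * s) ≤ 1 / 4 := by
    rw [← exp_neg_two_log_two]; exact Real.exp_le_exp.2 (by linarith)
  have hr : 0 ≤ Real.sqrt (1 / 4 - Real.exp (-2 * s)) := Real.sqrt_nonneg _
  have hsq := Real.sq_sqrt (show 0 ≤ 1 / 4 - Real.exp (-2 * s) by linarith)
  have hx := exp_mul_exp_aux s
  have hX := Real.exp_pos (2 * s)
  have hU0 := Real.exp_pos (-2 * s)
  rw [etaTail, etaTail']
  generalize Real.sqrt (1 / 4 - Real.exp (-2 * s)) = r at *
  generalize Real.exp (2 * s) = X at *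
  generalize Real.exp (-2 * s) = U at *
  obtain ⟨w, hw⟩ : ∃ w, w = 1 / 2 + r := ⟨_, rfl⟩
  have hw0 : 1 / 2 ≤ w := by linarith
  have hU : U = w * (1 - w) := by rw [hw]; linarith [hsq]
  have hw1 : w < 1 := by nlinarith
  have hrw : r = w - 1 / 2 := by linarith
  have hXw : X * (1 - w) = 1 / w := by
    rw [hU] at hx; rw [eq_div_iff (by linarith)]; linarith
  have hinv : 1 / w ≤ 1 + 4 * U := by
    rw [div_le_iff₀ (by linarith), hU]
    nlinarith [mul_nonneg (sub_nonneg.2 hw1.le) (mul_nonneg (sub_nonneg.2 hw0) (show 0 ≤ 4 * w + 2 by linarith))]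
  have hinv1 : 1 ≤ 1 / w := by rw [le_div_iff₀ (by linarith)]; linarith
  have hl0 : Real.log w ≤ 0 := Real.log_nonpos (by linarith) hw1.le
  have hl1 : 1 - 1 / w ≤ Real.log w := by
    have := Real.one_sub_inv_le_log_of_pos (show 0 < w by linarith)
    simpa using this
  have e1 : -X + 2 + 2 * X * r - 4 * Real.log (1 / 2 + r) = 2 - 2 * (1 / w) - 4 * Real.log w := by
    rw [← hw, ← hXw, hrw]; ring
  have e2 : 4 - 2 * X + 4 * X * r = 4 - 4 * (1 / w) := by
    rw [← hXw, hrw]; ring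
  rw [e1, e2, hrw]
  refine ⟨abs_le.2 ⟨by linarith, by linarith⟩, abs_le.2 ⟨by linarith, by linarith⟩,
    abs_le.2 ⟨by nlinarith, by nlinarith⟩⟩

lemma continuousOn_etaTail : Continuous etaTail := by
  unfold etaTail
  have : ∀ s : ℝ, 1 / 2 + Real.sqrt (1 / 4 - Real.exp (-2 * s)) ≠ 0 := fun s => by positivity
  fun_prop (disch := assumption)

lemma tail_integral {α : ℝ} (h0 : α ≠ 0) (h1 : -2 < α) (h2 : α < 2) :
    IntegrableOn (fun s => Real.exp (α * s) * etaTail s) (Set.Ioi (Real.log 2)) ∧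
    ∫ s in Set.Ioi (Real.log 2), Real.exp (α * s) * etaTail s =
      16 * (α - 1) / (α ^ 2 * (α + 2)) * (2 ^ α / 4 *
        (Real.Gamma (1 - α / 2) * Real.Gamma (1 / 2) / Real.Gamma (3 / 2 - α / 2)))
      - 2 ^ α * ((4 * Real.log 2 - 2) / α + 4 / (α * (α + 2)) - 8 / (α ^ 2 * (α + 2))) := by
  have hexp : ∀ s, Real.exp (α * s) * Real.exp (-2 * s) = Real.exp ((α - 2) * s) := by
    intro s; rw [← Real.exp_add]; ring_nf
  have hInt : IntegrableOn (fun s => Real.exp (α * s) * etaTail s) (Set.Ioi (Real.log 2)) := by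
    refine Integrable.mono' ((integrableOn_exp_mul_Ioi (a := α - 2) (by linarith)
      (Real.log 2)).const_mul 24) ?_ ?_
    · exact ((by fun_prop : Continuous fun s => Real.exp (α * s)).mul
        continuousOn_etaTail).aestronglyMeasurable
    · filter_upwards [ae_restrict_mem measurableSet_Ioi] with s hs
      rw [norm_mul, Real.norm_eq_abs, Real.norm_eq_abs, abs_of_pos (Real.exp_pos _), ← hexp]
      have := (tail_bounds (le_of_lt hs)).1
      nlinarith [Real.exp_pos (α * s)]
  refine ⟨hInt, ?_⟩
  obtain ⟨hj, hJ⟩ := tail_beta_aux h2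
  have h3 : α + 2 ≠ 0 := by linarith
  let F : ℝ → ℝ := fun s => Real.exp (α * s) * (etaTail s / α - etaTail' s / (α * (α + 2))
    + 8 / (α ^ 2 * (α + 2)) * (2 * Real.sqrt (1 / 4 - Real.exp (-2 * s)) - 1))
  have hFc : Continuous F := by
    have := continuousOn_etaTail
    have : Continuous etaTail' := by unfold etaTail'; fun_prop
    fun_prop
  have hF : ∀ s ∈ Set.Ioi (Real.log 2), HasDerivAt F (Real.exp (α * s) * etaTail s -
      16 * (α - 1) / (α ^ 2 * (α + 2)) * (Real.exp (α * s) *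
      (Real.exp (-2 * s) / Real.sqrt (1 / 4 - Real.exp (-2 * s))))) s := by
    intro s hs
    have hs' : Real.log 2 < s := hs
    have h := (hasDerivAt_exp_aux α s).mul ((((hasDerivAt_etaTail hs').div_const α).sub
      ((hasDerivAt_etaTail' hs').div_const (α * (α + 2)))).add
      ((((hasDerivAt_r_aux hs').const_mul 2).sub_const 1).const_mul (8 / (α ^ 2 * (α + 2)))))
    refine h.congr_deriv ?_
    have hu := u_lt_aux hs'
    have hr : 0 < Real.sqrt (1 / 4 - Real.exp (-2 * s)) := Real.sqrt_pos.2 (by linarith)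
    have hsq := Real.sq_sqrt (show 0 ≤ 1 / 4 - Real.exp (-2 * s) by linarith)
    simp only [Pi.add_apply, Pi.sub_apply]
    generalize Real.sqrt (1 / 4 - Real.exp (-2 * s)) = r at *
    generalize hU : Real.exp (-2 * s) = U at *
    have hU' : U = 1 / 4 - r ^ 2 := by linarith
    rw [hU']
    field_simp
    ring
  have hlim : Filter.Tendsto F Filter.atTop (nhds 0) := by
    have hlin : Filter.Tendsto (fun s : ℝ => (α - 2) * s) Filter.atTop Filter.atBot :=
      Filter.tendsto_id.const_mul_atTop_of_neg (by linarith)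
    have hlim0 := (Real.tendsto_exp_atBot.comp hlin).const_mul
      (24 / |α| + 16 / |α * (α + 2)| + |8 / (α ^ 2 * (α + 2))| * 4)
    rw [mul_zero] at hlim0
    refine squeeze_zero_norm' ?_ hlim0
    filter_upwards [Filter.eventually_ge_atTop (Real.log 2)] with s hs
    obtain ⟨b1, b2, b3⟩ := tail_bounds hs
    simp only [F, Function.comp]
    rw [norm_mul, Real.norm_eq_abs, Real.norm_eq_abs, abs_of_pos (Real.exp_pos _), ← hexp]
    have c1 : |etaTail s / α| ≤ 24 * Real.exp (-2 * s) / |α| := by rw [abs_div]; gcongr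
    have c2 : |etaTail' s / (α * (α + 2))| ≤ 16 * Real.exp (-2 * s) / |α * (α + 2)| := by
      rw [abs_div]; gcongr
    have c3 : |8 / (α ^ 2 * (α + 2)) * (2 * Real.sqrt (1 / 4 - Real.exp (-2 * s)) - 1)| ≤
        |8 / (α ^ 2 * (α + 2))| * (4 * Real.exp (-2 * s)) := by rw [abs_mul]; gcongr
    have c4 := (abs_add_le (etaTail s / α - etaTail' s / (α * (α + 2)))
      (8 / (α ^ 2 * (α + 2)) * (2 * Real.sqrt (1 / 4 - Real.exp (-2 * s)) - 1)))
    have c5 := abs_sub (etaTail s / α) (etaTail' s / (α * (α + 2)))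
    calc _ ≤ Real.exp (α * s) * (24 * Real.exp (-2 * s) / |α| + 16 * Real.exp (-2 * s) / |α * (α + 2)| + |8 / (α ^ 2 * (α + 2))| * (4 * Real.exp (-2 * s))) := by
          gcongr; linarith
      _ = _ := by ring
  have hfin := integral_Ioi_of_hasDerivAt_of_tendsto hFc.continuousWithinAt hF
    (hInt.sub (hj.const_mul _)) hlim
  rw [integral_sub hInt (hj.const_mul _), integral_const_mul, hJ] at hfin
  have hFv : F (Real.log 2) = 2 ^ α * ((4 * Real.log 2 - 2) / α + 4 / (α * (α + 2)) - 8 / (α ^ 2 * (α + 2))) := by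
    simp only [F, etaTail, etaTail', exp_two_log_two, exp_neg_two_log_two]
    rw [Real.rpow_def_of_pos (by norm_num), mul_comm α]
    simp
    ring
  rw [hFv] at hfin
  linarith

lemma mid_integral {α : ℝ} (h0 : α ≠ 0) (h3 : α + 2 ≠ 0) :
    ∫ s in Set.Ioc 0 (Real.log 2), Real.exp (α * s) * (-Real.exp (2 * s) + 2 + 4 * s) =
     2 ^ α * (-4 / (α + 2) + 2 / α + 4 * Real.log 2 / α - 4 / α ^ 2) + 1 / (α + 2)
      - 2 / α + 4 / α ^ 2 := by
  rw [← intervalIntegral.integral_of_le (Real.log_nonneg (by norm_num))]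
  rw [intervalIntegral.integral_eq_sub_of_hasDerivAt (f := fun s => Real.exp (α * s) *
    (-Real.exp (2 * s) / (α + 2) + 2 / α + 4 * s / α - 4 / α ^ 2))]
  · rw [exp_two_log_two, Real.rpow_def_of_pos (by norm_num), mul_comm α]
    simp
    ring
  · intro s _
    have h := (hasDerivAt_exp_aux α s).mul (((((hasDerivAt_exp_aux 2 s).neg.div_const (α + 2)).add_const
      (2 / α)).add (((hasDerivAt_id s).const_mul 4).div_const α)).sub_const (4 / α ^ 2))
    refine h.congr_deriv ?_
    simp
    field_simp
    ring
  · exact (by fun_prop : Continuous fun s : ℝ => Real.exp (α * s) * (-Real.exp (2 * s) + 2 + 4 * s)).intervalIntegrable _ _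

theorem etaLog_moment_generating_function (α : ℝ) (hα : 0 < |α|) (hα2 : |α| < 2) :
    (∫ s : ℝ, Real.exp (α * s) * etaLog s) =
      24 / (Real.pi ^ 2 * α * (α + 2)) *
        (2 / α + (2 : ℝ) ^ α *
          (Real.Gamma (-α / 2) * Real.Gamma (1 / 2) / Real.Gamma ((1 - α) / 2))) := by
  have h0 : α ≠ 0 := abs_pos.1 hα
  obtain ⟨h1, h2⟩ := abs_lt.1 hα2
  have h3 : α + 2 ≠ 0 := by linarith
  have hl2 : 0 < Real.log 2 := Real.log_pos (by norm_num)
  obtain ⟨ht, hT⟩ := tail_integral h0 h1 h2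
  have g1 : ∀ s ∈ Set.Iic (0:ℝ), 6 / Real.pi ^ 2 * Real.exp ((α + 2) * s) =
      Real.exp (α * s) * etaLog s := by
    intro s hs
    rw [etaLog, if_pos (Set.mem_Iic.1 hs), add_mul, Real.exp_add]; ring
  have g2 : ∀ s ∈ Set.Ioc 0 (Real.log 2), 6 / Real.pi ^ 2 * (Real.exp (α * s) *
      (-Real.exp (2 * s) + 2 + 4 * s)) = Real.exp (α * s) * etaLog s := by
    intro s hs
    rw [etaLog, if_neg (not_le.2 hs.1), if_pos hs.2]; ring
  have g3 : ∀ s ∈ Set.Ioi (Real.log 2), 6 / Real.pi ^ 2 * (Real.exp (α * s) * etaTail s) =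
      Real.exp (α * s) * etaLog s := by
    intro s hs
    have hs' : Real.log 2 < s := hs
    rw [etaLog, if_neg (not_le.2 (hl2.trans hs')), if_neg (not_le.2 hs'), etaTail]; ring
  have i1 := IntegrableOn.congr_fun (Integrable.const_mul
    (integrableOn_exp_mul_Iic (a := α + 2) (by linarith) 0)
    (6 / Real.pi ^ 2)) g1 measurableSet_Iic
  have i2 : IntegrableOn _ (Set.Ioc 0 (Real.log 2)) :=
    (((by fun_prop : Continuous fun s : ℝ => 6 / Real.pi ^ 2 * (Real.exp (α * s) *
      (-Real.exp (2 * s) + 2 + 4 * s))).integrableOn_Ioc)).congr_fun g2 measurableSet_Ioc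
  have i3 := IntegrableOn.congr_fun (Integrable.const_mul ht (6 / Real.pi ^ 2)) g3 measurableSet_Ioi
  have i23 := i2.union i3
  rw [Set.Ioc_union_Ioi_eq_Ioi hl2.le] at i23
  rw [← intervalIntegral.integral_Iic_add_Ioi i1 i23, ← Set.Ioc_union_Ioi_eq_Ioi hl2.le,
    setIntegral_union (Set.Ioc_disjoint_Ioi le_rfl) measurableSet_Ioi i2 i3,
    ← setIntegral_congr_fun measurableSet_Iic g1, ← setIntegral_congr_fun measurableSet_Ioc g2,
    ← setIntegral_congr_fun measurableSet_Ioi g3, integral_const_mul, integral_const_mul,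
    integral_const_mul, hT, mid_integral h0 h3, integral_exp_mul_Iic (by linarith)]
  have hG : (α - 1) * (Real.Gamma (1 - α / 2) * Real.Gamma (1 / 2) / Real.Gamma (3 / 2 - α / 2)) =
      α * (Real.Gamma (-α / 2) * Real.Gamma (1 / 2) / Real.Gamma ((1 - α) / 2)) := by
    rcases eq_or_ne α 1 with rfl | h
    · simp
    · have hne : (1 - α) / 2 ≠ 0 := by
        intro h'; apply h; linarith
      rw [show 1 - α / 2 = -α / 2 + 1 by ring, show 3 / 2 - α / 2 = (1 - α) / 2 + 1 by ring,
        Real.Gamma_add_one (by simpa using h0), Real.Gamma_add_one hne]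
      rw [show -α / 2 * Real.Gamma (-α / 2) * Real.Gamma (1 / 2) / ((1 - α) / 2 * Real.Gamma ((1 - α) / 2)) = (-α / 2 / ((1 - α) / 2)) * (Real.Gamma (-α / 2) * Real.Gamma (1 / 2) / Real.Gamma ((1 - α) / 2)) by
        rw [mul_assoc, mul_div_mul_comm], ← mul_assoc]
      congr 1
      have : 1 - α ≠ 0 := fun h' => h (by linarith)
      field_simp
      ring
  generalize Real.Gamma (1 - α / 2) * Real.Gamma (1 / 2) / Real.Gamma (3 / 2 - α / 2) = B1 at *
  generalize Real.Gamma (-α / 2) * Real.Gamma (1 / 2) / Real.Gamma ((1 - α) / 2) = B2 at *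
  have e : 16 * (α - 1) / (α ^ 2 * (α + 2)) * (2 ^ α / 4 * B1) =
      4 * 2 ^ α / (α ^ 2 * (α + 2)) * ((α - 1) * B1) := by ring
  rw [e, hG]
  have hpi := Real.pi_ne_zero
  simp only [mul_zero, Real.exp_zero]
  field_simp
  ring
end

section
/- The second moment of η_log satisfies μ_2 = ∫_ℝ s²·η_log(s) ds = 3π²/40 + 1/2 − 6·ζ(3)/π², where ζ is the Riemann zeta function. -/
open MeasureTheory

open Set

lemma aux_image_exp : (fun x : ℝ => Real.exp (-x)) '' Ioi 0 = Ioo 0 1 := by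
  ext p
  constructor
  · rintro ⟨x, hx, rfl⟩
    exact ⟨Real.exp_pos _, by simpa using hx⟩
  · rintro ⟨h0, h1⟩
    exact ⟨-Real.log p, by simpa using Real.log_neg h0 h1, by simp [Real.exp_log h0]⟩

lemma aux_deriv_exp (s : Set ℝ) (x : ℝ) :
    HasDerivWithinAt (fun x : ℝ => Real.exp (-x)) (-Real.exp (-x)) s x := by
  have := ((hasDerivAt_id x).neg.exp).hasDerivWithinAt (s := s)
  simpa using this

lemma aux_inj_exp : InjOn (fun x : ℝ => Real.exp (-x)) (Ioi 0) := by
  intro a _ b _ h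
  simpa using h

lemma aux_cov_term (n k : ℕ) (x : ℝ) :
    |-Real.exp (-x)| • ((Real.exp (-x)) ^ n * Real.log (Real.exp (-x)) ^ k)
      = (-1) ^ k * (x ^ ((k + 1 : ℝ) - 1) * Real.exp (-((n + 1 : ℝ) * x))) := by
  rw [abs_neg, abs_of_pos (Real.exp_pos _), Real.log_exp, smul_eq_mul, add_sub_cancel_right,
    Real.rpow_natCast, ← Real.exp_nat_mul, neg_pow]
  have : Real.exp (-((n + 1 : ℝ) * x)) = Real.exp (-x) * Real.exp (n * -x) := by
    rw [← Real.exp_add]; ring_nf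
  rw [this]; ring

lemma aux_powlog_int (n k : ℕ) :
    IntegrableOn (fun p : ℝ => p ^ n * Real.log p ^ k) (Ioo 0 1) := by
  rw [← aux_image_exp, integrableOn_image_iff_integrableOn_abs_deriv_smul measurableSet_Ioi
    (fun x _ => aux_deriv_exp _ x) aux_inj_exp]
  simp_rw [aux_cov_term]
  apply Integrable.const_mul
  have := integrableOn_rpow_mul_exp_neg_mul_rpow (p := 1) (s := (k : ℝ)) (b := (n + 1 : ℝ))
    (by have : (0 : ℝ) ≤ k := by positivity
        linarith) one_pos (by positivity)
  refine this.congr_fun (fun x _ => ?_) measurableSet_Ioi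
  simp only [Real.rpow_one, add_sub_cancel_right, neg_mul]

lemma aux_powlog (n k : ℕ) :
    ∫ p in Ioo (0 : ℝ) 1, p ^ n * Real.log p ^ k = (-1) ^ k * k.factorial / (n + 1 : ℝ) ^ (k + 1) := by
  rw [← aux_image_exp, integral_image_eq_integral_abs_deriv_smul measurableSet_Ioi
    (fun x _ => aux_deriv_exp _ x) aux_inj_exp]
  simp_rw [aux_cov_term]
  rw [integral_const_mul, Real.integral_rpow_mul_exp_neg_mul_Ioi (by positivity) (by positivity),
    Real.Gamma_nat_eq_factorial]
  have : (1 / (n + 1 : ℝ)) ^ ((k : ℝ) + 1) = (1 / (n + 1 : ℝ)) ^ (k + 1) := by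
    rw [← Real.rpow_natCast]; norm_cast
  rw [this, one_div, inv_pow]
  field_simp

lemma aux_log_int (k : ℕ) : IntegrableOn (fun p : ℝ => Real.log p ^ k) (Ioo 0 1) := by
  simpa using aux_powlog_int 0 k

lemma aux_abs_log_le {p : ℝ} (h0 : 1 / 2 ≤ p) (h1 : p < 1) : |Real.log p| ≤ 2 * (1 - p) := by
  have hp : 0 < p := by linarith
  rw [abs_of_neg (Real.log_neg hp h1)]
  have h := Real.one_sub_inv_le_log_of_pos hp
  have : p⁻¹ - 1 ≤ 2 * (1 - p) := by
    have h2 : p⁻¹ - 1 = (1 - p) * p⁻¹ := by field_simp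
    have h3 : p⁻¹ ≤ 2 := by
      rw [inv_le_comm₀ hp (by norm_num)]; linarith
    rw [h2]
    nlinarith
  linarith

lemma aux_E_int (k : ℕ) :
    IntegrableOn (fun p : ℝ => Real.log p ^ (k + 1) / (1 - p)) (Ioo 0 1) := by
  have hb : IntegrableOn (fun p : ℝ => 2 * |Real.log p ^ (k + 1)| + 2 * |Real.log p ^ k|)
      (Ioo 0 1) :=
    ((aux_log_int (k + 1)).abs.const_mul 2).add ((aux_log_int k).abs.const_mul 2)
  refine Integrable.mono' hb (Measurable.aestronglyMeasurable (by fun_prop)) ?_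
  refine (ae_restrict_iff' measurableSet_Ioo).2 (Filter.Eventually.of_forall ?_)
  rintro p ⟨h0, h1⟩
  have hq : 0 < 1 - p := by linarith
  rw [Real.norm_eq_abs, abs_div, abs_of_pos hq, div_le_iff₀ hq]
  rcases le_total (1 / 2) p with h | h
  · have := aux_abs_log_le h h1
    have h5 : |Real.log p ^ (k + 1)| = |Real.log p ^ k| * |Real.log p| := by
      rw [pow_succ, abs_mul]
    nlinarith [mul_le_mul_of_nonneg_left this (abs_nonneg (Real.log p ^ k)),
      mul_nonneg (abs_nonneg (Real.log p ^ (k + 1))) hq.le]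
  · nlinarith [mul_nonneg (abs_nonneg (Real.log p ^ (k + 1))) (by linarith : 0 ≤ 1 / 2 - p),
      mul_nonneg (abs_nonneg (Real.log p ^ k)) hq.le]

lemma aux_norm_powlog (n k : ℕ) : 
    ∫ p in Ioo (0 : ℝ) 1, ‖p ^ n * Real.log p ^ k‖ = k.factorial / (n + 1 : ℝ) ^ (k + 1) := by
  have : ∫ p in Ioo (0 : ℝ) 1, ‖p ^ n * Real.log p ^ k‖
      = ∫ p in Ioo (0 : ℝ) 1, (-1) ^ k * (p ^ n * Real.log p ^ k) := by
    apply setIntegral_congr_fun measurableSet_Ioo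
    rintro p ⟨h0, h1⟩
    have := Real.log_neg h0 h1
    simp only [Real.norm_eq_abs, abs_mul, abs_pow, abs_of_pos h0, abs_of_neg this]
    rw [neg_pow]; ring
  rw [this, integral_const_mul, aux_powlog, mul_div_assoc', ← mul_assoc, ← mul_pow]
  simp

lemma aux_E (k : ℕ) :
    ∫ p in Ioo (0 : ℝ) 1, Real.log p ^ (k + 1) / (1 - p)
      = (-1) ^ (k + 1) * (k + 1).factorial * ∑' n : ℕ, 1 / (n + 1 : ℝ) ^ (k + 2) := by
  have hs : Summable fun n : ℕ => 1 / (n + 1 : ℝ) ^ (k + 2) := by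
    have := (summable_nat_add_iff 1).2 (Real.summable_one_div_nat_pow.2 (by omega : 1 < k + 2))
    simpa using this
  have h := hasSum_integral_of_summable_integral_norm
    (μ := volume.restrict (Ioo (0 : ℝ) 1)) (F := fun (n : ℕ) p => p ^ n * Real.log p ^ (k + 1))
    (fun n => aux_powlog_int n (k + 1)) (by
      simp_rw [aux_norm_powlog]
      simpa [div_eq_mul_inv] using hs.mul_left ((k + 1).factorial : ℝ))
  have h2 : ∫ p in Ioo (0 : ℝ) 1, Real.log p ^ (k + 1) / (1 - p)
      = ∫ p in Ioo (0 : ℝ) 1, ∑' n : ℕ, p ^ n * Real.log p ^ (k + 1) := by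
    apply setIntegral_congr_fun measurableSet_Ioo
    rintro p ⟨h0, h1⟩
    simp only
    rw [tsum_mul_right, tsum_geometric_of_lt_one h0.le h1]
    ring
  rw [h2, ← h.tsum_eq, ← tsum_mul_left]
  congr 1
  ext n
  rw [aux_powlog]
  ring

noncomputable def auxA (x : ℕ × ℕ) : ℝ := 1 / ((x.1 + 1 : ℝ) * (x.1 + x.2 + 2 : ℝ) ^ 3)
noncomputable def auxB (x : ℕ × ℕ) : ℝ := 1 / ((x.1 + 1 : ℝ) ^ 2 * (x.1 + x.2 + 2 : ℝ) ^ 2)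
noncomputable def auxf (n : ℕ) : ℝ := 1 / (n + 1 : ℝ) ^ 2

lemma aux_pf (x : ℕ × ℕ) :
    auxf x.1 * auxf x.2 = auxB x + auxB x.swap + 2 * auxA x + 2 * auxA x.swap := by
  obtain ⟨m, n⟩ := x
  simp only [auxf, auxA, auxB, Prod.swap]
  have h1 : (m + 1 : ℝ) ≠ 0 := by positivity
  have h2 : (n + 1 : ℝ) ≠ 0 := by positivity
  have h3 : (m + n + 2 : ℝ) ≠ 0 := by positivity
  have h4 : (n + m + 2 : ℝ) = m + n + 2 := by ring
  rw [h4]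
  field_simp
  ring

lemma auxA_nonneg (x) : 0 ≤ auxA x := by unfold auxA; positivity
lemma auxB_nonneg (x) : 0 ≤ auxB x := by unfold auxB; positivity
lemma auxf_nonneg (x) : 0 ≤ auxf x := by unfold auxf; positivity

lemma auxf_hasSum : HasSum auxf (Real.pi ^ 2 / 6) := by
  have := (hasSum_nat_add_iff' 1).2 hasSum_zeta_two
  have e : auxf = fun n : ℕ => 1 / (n + 1 : ℝ) ^ 2 := rfl
  rw [e]
  simpa using this

lemma aux_four_hasSum : HasSum (fun n : ℕ => 1 / (n + 1 : ℝ) ^ 4) (Real.pi ^ 4 / 90) := by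
  have := (hasSum_nat_add_iff' 1).2 hasSum_zeta_four
  simpa using this

lemma auxff_summable : Summable fun x : ℕ × ℕ => auxf x.1 * auxf x.2 :=
  auxf_hasSum.summable.mul_of_nonneg auxf_hasSum.summable auxf_nonneg auxf_nonneg

lemma auxA_summable : Summable auxA := by
  refine Summable.of_nonneg_of_le auxA_nonneg (fun x => ?_) auxff_summable
  rw [aux_pf]
  linarith [auxA_nonneg x, auxB_nonneg x, auxA_nonneg x.swap, auxB_nonneg x.swap]

lemma auxB_summable : Summable auxB := by
  refine Summable.of_nonneg_of_le auxB_nonneg (fun x => ?_) auxff_summable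
  rw [aux_pf]
  linarith [auxA_nonneg x, auxB_nonneg x, auxA_nonneg x.swap, auxB_nonneg x.swap]

lemma auxff_tsum : ∑' x : ℕ × ℕ, auxf x.1 * auxf x.2 = (Real.pi ^ 2 / 6) ^ 2 := by
  have := auxf_hasSum.summable.tsum_mul_tsum auxf_hasSum.summable auxff_summable
  rw [← this, auxf_hasSum.tsum_eq]; ring

lemma aux_swap (g : ℕ × ℕ → ℝ) : ∑' x : ℕ × ℕ, g x.swap = ∑' x, g x :=
  (Equiv.prodComm ℕ ℕ).tsum_eq g

lemma aux_sum1 : (Real.pi ^ 2 / 6) ^ 2 = 2 * ∑' x, auxB x + 4 * ∑' x, auxA x := by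
  have hA' : Summable fun x : ℕ × ℕ => auxA x.swap :=
    (Equiv.prodComm ℕ ℕ).summable_iff.2 auxA_summable
  have hB' : Summable fun x : ℕ × ℕ => auxB x.swap :=
    (Equiv.prodComm ℕ ℕ).summable_iff.2 auxB_summable
  rw [← auxff_tsum]
  simp_rw [aux_pf]
  rw [Summable.tsum_add ((auxB_summable.add hB').add (auxA_summable.mul_left 2)) (hA'.mul_left 2),
    Summable.tsum_add (auxB_summable.add hB') (auxA_summable.mul_left 2),
    Summable.tsum_add auxB_summable hB', tsum_mul_left, tsum_mul_left, aux_swap, aux_swap]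
  ring

lemma aux_sum2 : (Real.pi ^ 2 / 6) ^ 2 = 2 * ∑' x, auxB x + Real.pi ^ 4 / 90 := by
  let F : ℕ × ℕ → ℝ := fun x => auxf x.1 * auxf x.2
  let U : Set (ℕ × ℕ) := {x | x.1 < x.2}
  let V : Set (ℕ × ℕ) := {x | x.1 = x.2}
  let W : Set (ℕ × ℕ) := {x | x.2 < x.1}
  have hF : Summable F := auxff_summable
  have hsplit : ∀ x, F x = U.indicator F x + V.indicator F x + W.indicator F x := by
    intro x
    rcases lt_trichotomy x.1 x.2 with h | h | h
    · have h1 : x ∈ U := h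
      have h2 : x ∉ V := h.ne
      have h3 : x ∉ W := h.not_gt
      simp [h1, h2, h3]
    · have h1 : x ∉ U := h.not_lt
      have h2 : x ∈ V := h
      have h3 : x ∉ W := h.not_gt
      simp [h1, h2, h3]
    · have h1 : x ∉ U := h.not_gt
      have h2 : x ∉ V := h.ne'
      have h3 : x ∈ W := h
      simp [h1, h2, h3]
  have hU : ∑' x, U.indicator F x = ∑' x, auxB x := by
    have hi : Function.Injective (fun x : ℕ × ℕ => (x.1, x.1 + x.2 + 1)) := by
      rintro ⟨a, b⟩ ⟨c, d⟩ h
      simp only [Prod.mk.injEq] at h ⊢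
      omega
    rw [← hi.tsum_eq (f := U.indicator F)]
    · congr 1
      ext x
      rw [Set.indicator_of_mem (by simp only [U, Set.mem_ofPred_eq]; omega)]
      simp only [F, auxf, auxB]
      push_cast
      rw [div_mul_div_comm, one_mul]
      congr 3; ring
    · intro x hx
      have hx' : x ∈ U := Set.mem_of_indicator_ne_zero hx
      exact ⟨(x.1, x.2 - x.1 - 1), by
        simp only [U, Set.mem_ofPred_eq] at hx'
        ext <;> simp only []; omega⟩
  have hW : ∑' x, W.indicator F x = ∑' x, U.indicator F x := by
    rw [← aux_swap]
    congr 1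
    ext x
    by_cases h : x ∈ U
    · rw [Set.indicator_of_mem h, Set.indicator_of_mem (by exact h)]
      simp only [F, Prod.swap]; ring
    · rw [Set.indicator_of_notMem h, Set.indicator_of_notMem (by exact h)]
  have hV : ∑' x, V.indicator F x = Real.pi ^ 4 / 90 := by
    have hi : Function.Injective (fun n : ℕ => (n, n)) := by
      intro a b h
      exact (Prod.mk.inj h).1
    rw [← hi.tsum_eq (f := V.indicator F), ← aux_four_hasSum.tsum_eq]
    · congr 1
      ext x
      rw [Set.indicator_of_mem (by simp [V])]
      simp only [F, auxf]
      rw [div_mul_div_comm, one_mul]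
      congr 1; ring
    · intro x hx
      have hx' : x ∈ V := Set.mem_of_indicator_ne_zero hx
      exact ⟨x.1, Prod.ext rfl hx'⟩
  rw [← auxff_tsum]
  change ∑' x, F x = _
  rw [tsum_congr hsplit, Summable.tsum_add ((hF.indicator U).add (hF.indicator V)) (hF.indicator W),
    Summable.tsum_add (hF.indicator U) (hF.indicator V), hW, hU, hV]
  ring

lemma auxA_tsum : ∑' x, auxA x = Real.pi ^ 4 / 360 := by
  have := aux_sum1
  have := aux_sum2
  linarith

/-- The mixed weight four integrand. -/
lemma aux_X_int :
    IntegrableOn (fun p : ℝ => Real.log p ^ 2 * Real.log (1 - p) / (1 - p)) (Ioo 0 1) := by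
  have hrefl : IntegrableOn (fun p : ℝ => Real.log (1 - p)) (Ioo 0 1) := by
    have h := (aux_log_int 1)
    have := (integrableOn_image_iff_integrableOn_abs_deriv_smul (s := Ioo (0 : ℝ) 1)
      (f := fun x => 1 - x) (f' := fun _ => -1) measurableSet_Ioo
      (fun x _ => by simpa using ((hasDerivAt_id x).const_sub 1).hasDerivWithinAt)
      (fun a _ b _ h => by simpa using h) (fun p : ℝ => Real.log p ^ 1)).1 (by simpa using h)
    simpa using this
  have hb : IntegrableOn (fun p : ℝ => 4 * |Real.log p ^ 2| + 4 * |Real.log (1 - p)|)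
      (Ioo 0 1) :=
    ((aux_log_int 2).abs.const_mul 4).add (hrefl.abs.const_mul 4)
  refine Integrable.mono' hb (Measurable.aestronglyMeasurable (by fun_prop)) ?_
  refine (ae_restrict_iff' measurableSet_Ioo).2 (Filter.Eventually.of_forall ?_)
  rintro p ⟨h0, h1⟩
  have hq : 0 < 1 - p := by linarith
  rw [Real.norm_eq_abs, abs_div, abs_of_pos hq, div_le_iff₀ hq, abs_mul]
  rcases le_total (1 / 2) p with h | h
  · have h2 := aux_abs_log_le h h1
    have h3 : |Real.log p ^ 2| ≤ 4 * (1 - p) := by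
      rw [abs_pow]
      nlinarith [abs_nonneg (Real.log p)]
    nlinarith [mul_le_mul_of_nonneg_right h3 (abs_nonneg (Real.log (1 - p))),
      mul_nonneg (abs_nonneg (Real.log p ^ 2)) hq.le]
  · have h2 := aux_abs_log_le (p := 1 - p) (by linarith) (by linarith)
    have h3 : |Real.log (1 - p)| ≤ 1 := by linarith
    nlinarith [abs_nonneg (Real.log p ^ 2), mul_le_mul_of_nonneg_left h3 (abs_nonneg (Real.log p ^ 2)),
      mul_nonneg (abs_nonneg (Real.log p ^ 2)) (by linarith : 0 ≤ 1 / 2 - p),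
      mul_nonneg (abs_nonneg (Real.log (1 - p))) hq.le]

lemma aux_X :
    ∫ p in Ioo (0 : ℝ) 1, Real.log p ^ 2 * Real.log (1 - p) / (1 - p) = - (Real.pi ^ 4 / 180) := by
  have hterm : ∀ x : ℕ × ℕ, (fun p : ℝ => p ^ (x.1 + 1) / (x.1 + 1 : ℝ) * p ^ x.2 * Real.log p ^ 2)
      = fun p => (1 / (x.1 + 1 : ℝ)) * (p ^ (x.1 + 1 + x.2) * Real.log p ^ 2) := by
    intro x; ext p; ring
  have hI : ∀ x : ℕ × ℕ, ∫ p in Ioo (0 : ℝ) 1, (1 / (x.1 + 1 : ℝ)) *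
      (p ^ (x.1 + 1 + x.2) * Real.log p ^ 2) = 2 * auxA x := by
    intro x
    rw [integral_const_mul, aux_powlog, auxA]
    push_cast
    have : (x.1 + 1 + x.2 + 1 : ℝ) = x.1 + x.2 + 2 := by ring
    rw [this]
    simp [Nat.factorial]
    field_simp
  have h := hasSum_integral_of_summable_integral_norm
    (μ := volume.restrict (Ioo (0 : ℝ) 1))
    (F := fun (x : ℕ × ℕ) p => p ^ (x.1 + 1) / (x.1 + 1 : ℝ) * p ^ x.2 * Real.log p ^ 2)
    (fun x => by
      rw [hterm]
      exact (aux_powlog_int _ 2).const_mul _) (by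
      have : ∀ x : ℕ × ℕ, ∫ p in Ioo (0 : ℝ) 1,
          ‖p ^ (x.1 + 1) / (x.1 + 1 : ℝ) * p ^ x.2 * Real.log p ^ 2‖ = 2 * auxA x := by
        intro x
        rw [← hI]
        apply setIntegral_congr_fun measurableSet_Ioo
        rintro p ⟨h0, h1⟩
        have h3 := congrFun (hterm x) p
        simp only at h3 ⊢
        rw [h3, Real.norm_of_nonneg (by positivity)]
      simp_rw [this]
      exact auxA_summable.mul_left 2)
  have h2 : ∫ p in Ioo (0 : ℝ) 1, Real.log p ^ 2 * Real.log (1 - p) / (1 - p)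
      = - ∫ p in Ioo (0 : ℝ) 1,
        ∑' x : ℕ × ℕ, p ^ (x.1 + 1) / (x.1 + 1 : ℝ) * p ^ x.2 * Real.log p ^ 2 := by
    rw [← integral_neg]
    apply setIntegral_congr_fun measurableSet_Ioo
    rintro p ⟨h0, h1⟩
    simp only
    have e1 := Real.hasSum_pow_div_log_of_abs_lt_one (x := p) (by rw [abs_of_pos h0]; exact h1)
    have e2 := hasSum_geometric_of_lt_one h0.le h1
    have e3 := e1.summable.mul_of_nonneg e2.summable (fun n => by simp only [Pi.zero_apply]; positivity)
      (fun n => by simp only [Pi.zero_apply]; positivity)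
    have e4 := e1.summable.tsum_mul_tsum e2.summable e3
    rw [tsum_mul_right, ← e4, e1.tsum_eq, e2.tsum_eq]
    ring
  rw [h2, ← h.tsum_eq]
  simp_rw [hterm, hI]
  rw [tsum_mul_left, auxA_tsum]
  ring

open Filter Topology in
lemma aux_tendsto_mul_log_pow (b : ℕ) :
    Tendsto (fun x : ℝ => x * Real.log x ^ (b + 1)) (𝓝[>] 0) (𝓝 0) := by
  have h := (tendsto_log_mul_rpow_nhdsGT_zero (r := 1 / (b + 1 : ℝ)) (by positivity)).pow (b + 1)
  rw [zero_pow (by omega)] at h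
  refine h.congr' ?_
  filter_upwards [self_mem_nhdsWithin] with x hx
  have hx : 0 < x := hx
  rw [mul_pow, ← Real.rpow_natCast (x ^ (1 / (b + 1 : ℝ))), ← Real.rpow_mul hx.le]
  push_cast
  rw [one_div_mul_cancel (by positivity), Real.rpow_one, mul_comm]

open Filter Topology in
lemma aux_tendsto_q (b : ℕ) :
    Tendsto (fun p : ℝ => (1 - p) * Real.log (1 - p) ^ (b + 1)) (𝓝[<] 1) (𝓝 0) := by
  have : Tendsto (fun p : ℝ => 1 - p) (𝓝[<] 1) (𝓝[>] 0) := by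
    apply tendsto_nhdsWithin_of_tendsto_nhds_of_eventually_within
    · have : Tendsto (fun p : ℝ => 1 - p) (𝓝 1) (𝓝 (1 - 1)) := by
        exact (continuous_const.sub continuous_id).tendsto _
      rw [sub_self] at this
      exact this.mono_left nhdsWithin_le_nhds
    · filter_upwards [self_mem_nhdsWithin] with p hp
      have hp : p < 1 := hp
      exact mem_Ioi.2 (by linarith)
  exact (aux_tendsto_mul_log_pow b).comp this

open Filter Topology in
lemma aux_tendsto_L (b : ℕ) :
    Tendsto (fun p : ℝ => Real.log p * Real.log (1 - p) ^ (b + 1)) (𝓝[<] 1) (𝓝 0) := by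
  have h := ((aux_tendsto_q b).abs).const_mul 2
  rw [abs_zero, mul_zero] at h
  refine squeeze_zero_norm' ?_ h
  filter_upwards [Ioo_mem_nhdsLT (show (1 / 2 : ℝ) < 1 by norm_num)] with p hp
  rw [Real.norm_eq_abs, abs_mul, abs_mul, abs_of_pos (by linarith [hp.2] : 0 < 1 - p), ← mul_assoc]
  exact mul_le_mul_of_nonneg_right (aux_abs_log_le hp.1.le hp.2) (abs_nonneg _)

lemma aux_refl_int {a b : ℝ} {g : ℝ → ℝ} (hg : IntegrableOn g (Ioo a b)) :
    IntegrableOn (fun p => g (1 - p)) (Ioo (1 - b) (1 - a)) := by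
  have := (integrableOn_image_iff_integrableOn_abs_deriv_smul (s := Ioo (1 - b) (1 - a))
      (f := fun x => 1 - x) (f' := fun _ => -1) measurableSet_Ioo
      (fun x _ => by simpa using ((hasDerivAt_id x).const_sub 1).hasDerivWithinAt)
      (fun a _ b _ h => by simpa using h) g).1 (by simpa using hg)
  simpa using this

lemma aux_refl {a b : ℝ} (g : ℝ → ℝ) :
    ∫ p in Ioo (1 - b) (1 - a), g (1 - p) = ∫ p in Ioo a b, g p := by
  have := (integral_image_eq_integral_abs_deriv_smul (s := Ioo (1 - b) (1 - a))
      (f := fun x => 1 - x) (f' := fun _ => -1) measurableSet_Ioo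
      (fun x _ => by simpa using ((hasDerivAt_id x).const_sub 1).hasDerivWithinAt)
      (fun a _ b _ h => by simpa using h) g)
  simpa using this.symm

lemma aux_sym_int {g : ℝ → ℝ} (hg : IntegrableOn g (Ioo 0 1)) :
    IntegrableOn (fun p => g p + g (1 - p)) (Ioo (1 / 2) 1) := by
  have h1 : IntegrableOn g (Ioo (1 / 2) 1) := hg.mono_set (Ioo_subset_Ioo_left (by norm_num))
  have h2 : IntegrableOn g (Ioo 0 (1 / 2)) := hg.mono_set (Ioo_subset_Ioo_right (by norm_num))
  have h3 := aux_refl_int h2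
  norm_num at h3
  exact h1.add (by simpa using h3)

lemma aux_sym {g : ℝ → ℝ} (hg : IntegrableOn g (Ioo 0 1)) :
    ∫ p in Ioo (1 / 2 : ℝ) 1, (g p + g (1 - p)) = ∫ p in Ioo (0 : ℝ) 1, g p := by
  have h1 : IntegrableOn g (Ioo (1 / 2) 1) := hg.mono_set (Ioo_subset_Ioo_left (by norm_num))
  have h2 : IntegrableOn g (Ioo 0 (1 / 2)) := hg.mono_set (Ioo_subset_Ioo_right (by norm_num))
  have h3 := aux_refl_int h2
  have e := aux_refl (a := 0) (b := 1 / 2) g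
  rw [show (1 : ℝ) - 1 / 2 = 1 / 2 by norm_num, sub_zero] at h3 e
  rw [integral_add h1 h3, e]
  have i1 : IntervalIntegrable g volume 0 (1 / 2) :=
    (intervalIntegrable_iff_integrableOn_Ioo_of_le (by norm_num)).2 h2
  have i2 : IntervalIntegrable g volume (1 / 2) 1 :=
    (intervalIntegrable_iff_integrableOn_Ioo_of_le (by norm_num)).2 h1
  have := intervalIntegral.integral_add_adjacent_intervals i1 i2
  rw [intervalIntegral.integral_of_le (by norm_num), intervalIntegral.integral_of_le (by norm_num),
    intervalIntegral.integral_of_le (by norm_num), integral_Ioc_eq_integral_Ioo,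
    integral_Ioc_eq_integral_Ioo, integral_Ioc_eq_integral_Ioo] at this
  linarith

/-- The integrand after the substitution. -/
noncomputable def auxh (p : ℝ) : ℝ :=
  1 / 4 * (Real.log p + Real.log (1 - p)) ^ 2 * (1 / p ^ 2 - 2 / p)
    - 1 / 2 * Real.log p * (Real.log p + Real.log (1 - p)) ^ 2 * (1 / (1 - p) - 1 / p)

noncomputable def auxF (p : ℝ) : ℝ :=
  - 1 / 4 * ((Real.log p + Real.log (1 - p)) ^ 2 * ((1 - p) / p))
    - 1 / 2 * ((Real.log p + Real.log (1 - p)) * ((1 - p) / p)) - 1 / 2 * (1 / p) - Real.log p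
    - 1 / 2 * Real.log p ^ 2 - 1 / 2 * (Real.log p * Real.log (1 - p))
    - 1 / 6 * Real.log p ^ 3 - 1 / 2 * (Real.log p ^ 2 * Real.log (1 - p))
    + 1 / 8 * Real.log p ^ 4 + 1 / 3 * (Real.log p ^ 3 * Real.log (1 - p))
    + 3 / 8 * (Real.log p ^ 2 * Real.log (1 - p) ^ 2)
    + 1 / 6 * (Real.log p * Real.log (1 - p) ^ 3)

noncomputable def auxg (k : ℕ) (p : ℝ) : ℝ := Real.log p ^ (k + 1) / (1 - p)
noncomputable def auxgX (p : ℝ) : ℝ := Real.log p ^ 2 * Real.log (1 - p) / (1 - p)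

noncomputable def auxS (p : ℝ) : ℝ :=
  1 / 2 * (auxg 0 p + auxg 0 (1 - p)) + 1 / 2 * (auxg 1 p + auxg 1 (1 - p))
    + 1 / 6 * (auxg 2 p + auxg 2 (1 - p)) + 1 / 4 * (auxgX p + auxgX (1 - p))

lemma auxF_deriv {p : ℝ} (h0 : 0 < p) (h1 : p < 1) : HasDerivAt auxF (auxh p + auxS p) p := by
  have hq : 1 - p ≠ 0 := by linarith
  have hp : p ≠ 0 := h0.ne'
  have hL : HasDerivAt Real.log p⁻¹ p := Real.hasDerivAt_log hp
  have hQ : HasDerivAt (fun p : ℝ => 1 - p) (-1) p := by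
    simpa using (hasDerivAt_id p).const_sub 1
  have hM : HasDerivAt (fun p : ℝ => Real.log (1 - p)) (-1 / (1 - p)) p := hQ.log hq
  have hR : HasDerivAt (fun p : ℝ => (1 - p) / p) ((-1 * p - (1 - p) * 1) / p ^ 2) p :=
    hQ.fun_div (hasDerivAt_id p) hp
  have hI : HasDerivAt (fun p : ℝ => 1 / p) (- (p ^ 2)⁻¹) p := by
    simpa using hasDerivAt_inv hp
  have hT := hL.fun_add hM
  have H := ((((((((((((((hT.fun_pow 2).fun_mul hR).const_mul (- 1 / 4)).fun_sub
    ((hT.fun_mul hR).const_mul (1 / 2))).fun_sub (hI.const_mul (1 / 2))).fun_sub hL).fun_sub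
    ((hL.fun_pow 2).const_mul (1 / 2))).fun_sub ((hL.fun_mul hM).const_mul (1 / 2))).fun_sub
    ((hL.fun_pow 3).const_mul (1 / 6))).fun_sub (((hL.fun_pow 2).fun_mul hM).const_mul (1 / 2))).fun_add
    ((hL.fun_pow 4).const_mul (1 / 8))).fun_add (((hL.fun_pow 3).fun_mul hM).const_mul (1 / 3))).fun_add
    (((hL.fun_pow 2).fun_mul (hM.fun_pow 2)).const_mul (3 / 8))).fun_add
    ((hL.fun_mul (hM.fun_pow 3)).const_mul (1 / 6)))
  refine H.congr_deriv ?_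
  simp only [auxh, auxS, auxg, auxgX, sub_sub_cancel]
  generalize Real.log p = L
  generalize Real.log (1 - p) = M
  push_cast
  field_simp
  ring

open Filter Topology in
lemma auxF_tendsto_one : Tendsto auxF (𝓝[<] 1) (𝓝 (- 1 / 2)) := by
  have hp : Tendsto (fun p : ℝ => p) (𝓝[<] 1) (𝓝 1) := tendsto_id.mono_left nhdsWithin_le_nhds
  have hL : Tendsto Real.log (𝓝[<] 1) (𝓝 0) := by
    have := (Real.continuousAt_log one_ne_zero).tendsto
    rw [Real.log_one] at this
    exact this.mono_left nhdsWithin_le_nhds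
  have q1 := aux_tendsto_q 0
  have q2 := aux_tendsto_q 1
  have l1 := aux_tendsto_L 0
  have l2 := aux_tendsto_L 1
  have l3 := aux_tendsto_L 2
  have hq : Tendsto (fun p : ℝ => 1 - p) (𝓝[<] 1) (𝓝 (1 - 1)) := hp.const_sub 1
  have hpi := hp.inv₀ one_ne_zero
  have H := (((((((((((((((hL.pow 2).mul hq).add ((hL.mul q1).const_mul 2)).add q2).mul hpi).const_mul
    (- 1 / 4)).sub ((((hL.mul hq).add q1).mul hpi).const_mul (1 / 2))).sub (hpi.const_mul (1 / 2))).sub hL).sub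
    ((hL.pow 2).const_mul (1 / 2))).sub (l1.const_mul (1 / 2))).sub
    ((hL.pow 3).const_mul (1 / 6))).sub ((hL.mul l1).const_mul (1 / 2))).add
    (((hL.pow 4).const_mul (1 / 8)).add (((hL.pow 2).mul l1).const_mul (1 / 3)))).add
    ((hL.mul l2).const_mul (3 / 8))).add (l3.const_mul (1 / 6))
  norm_num at H
  rw [neg_div]
  refine H.congr fun p => ?_
  simp only [auxF, div_eq_mul_inv]
  ring

lemma auxF_half : auxF (1 / 2) = -1 + 2 * Real.log 2 - 2 * Real.log 2 ^ 2
    + 2 / 3 * Real.log 2 ^ 3 + Real.log 2 ^ 4 := by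
  have h : Real.log (1 / 2) = - Real.log 2 := by simp
  have h' : Real.log (1 - 1 / 2) = - Real.log 2 := by
    rw [show (1 : ℝ) - 1 / 2 = 1 / 2 by norm_num]; exact h
  simp only [auxF, h, h']
  ring

lemma auxg_int (k : ℕ) : IntegrableOn (auxg k) (Ioo 0 1) := aux_E_int k
lemma auxgX_int : IntegrableOn auxgX (Ioo 0 1) := aux_X_int

lemma auxh_int : IntegrableOn auxh (Ioo (1 / 2) 1) := by
  have hr : IntegrableOn (fun p : ℝ => Real.log (1 - p) ^ 2) (Ioo (1 / 2) 1) := by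
    have h3 := aux_refl_int (aux_log_int 2)
    rw [sub_self, sub_zero] at h3
    exact h3.mono_set (Ioo_subset_Ioo_left (by norm_num))
  refine Integrable.mono' (hr.const_mul 100) (Measurable.aestronglyMeasurable ?_) ?_
  · unfold auxh; fun_prop
  refine (ae_restrict_iff' measurableSet_Ioo).2 (Filter.Eventually.of_forall ?_)
  rintro p ⟨h0, h1⟩
  have hq : 0 < 1 - p := by linarith
  have hp : 0 < p := by linarith
  have hL := aux_abs_log_le h0.le h1
  have hT : (Real.log p + Real.log (1 - p)) ^ 2 ≤ 4 * Real.log (1 - p) ^ 2 := by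
    have a1 : Real.log (1 - p) ≤ Real.log p := Real.log_le_log hq (by linarith)
    have a2 := Real.log_neg hp h1
    nlinarith
  have hb1 : |1 / p ^ 2 - 2 / p| ≤ 8 := by
    have : 1 / p ≤ 2 := by rw [div_le_iff₀ hp]; linarith
    have h3 : 0 < 1 / p := by positivity
    have e : 1 / p ^ 2 - 2 / p = (1 / p) ^ 2 - 2 * (1 / p) := by field_simp
    rw [e, abs_le]
    constructor <;> nlinarith
  have hb2 : |Real.log p * (1 / (1 - p) - 1 / p)| ≤ 4 := by
    have e : 1 / (1 - p) - 1 / p = (2 * p - 1) / (p * (1 - p)) := by field_simp; ring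
    rw [e, mul_div_assoc', abs_div, abs_of_pos (mul_pos hp hq), div_le_iff₀ (mul_pos hp hq), abs_mul,
      abs_of_pos (by linarith : 0 < 2 * p - 1)]
    nlinarith [abs_nonneg (Real.log p)]
  have hT0 := sq_nonneg (Real.log p + Real.log (1 - p))
  have : auxh p = (Real.log p + Real.log (1 - p)) ^ 2 * (1 / 4 * (1 / p ^ 2 - 2 / p)
    - 1 / 2 * (Real.log p * (1 / (1 - p) - 1 / p))) := by unfold auxh; ring
  rw [this, Real.norm_eq_abs, abs_mul, abs_of_nonneg hT0]
  have hb : |1 / 4 * (1 / p ^ 2 - 2 / p) - 1 / 2 * (Real.log p * (1 / (1 - p) - 1 / p))| ≤ 4 := by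
    rw [abs_le] at *
    constructor <;> linarith [hb1.1, hb1.2, hb2.1, hb2.2]
  calc _ ≤ (4 * Real.log (1 - p) ^ 2) * 4 := mul_le_mul hT hb (abs_nonneg _) (by positivity)
    _ ≤ _ := by nlinarith [sq_nonneg (Real.log (1 - p))]

lemma auxS_int : IntegrableOn auxS (Ioo (1 / 2) 1) :=
  ((((aux_sym_int (auxg_int 0)).const_mul (1 / 2)).add
    ((aux_sym_int (auxg_int 1)).const_mul (1 / 2))).add
    ((aux_sym_int (auxg_int 2)).const_mul (1 / 6))).add
    ((aux_sym_int auxgX_int).const_mul (1 / 4))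

lemma aux_zeta_three : (riemannZeta 3).re = ∑' n : ℕ, 1 / (n + 1 : ℝ) ^ 3 := by
  have h := zeta_nat_eq_tsum_of_gt_one (k := 3) (by norm_num)
  have hs : Summable fun n : ℕ => 1 / (n : ℝ) ^ 3 :=
    Real.summable_one_div_nat_pow.2 (by norm_num)
  have h2 : riemannZeta 3 = ((∑' n : ℕ, 1 / (n : ℝ) ^ 3 : ℝ) : ℂ) := by
    push_cast at h ⊢
    exact h
  rw [h2, Complex.ofReal_re, hs.tsum_eq_zero_add]
  simp

lemma auxS_integral : ∫ p in Ioo (1 / 2 : ℝ) 1, auxS p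
    = - (Real.pi ^ 2 / 12) + (riemannZeta 3).re - Real.pi ^ 4 / 80 := by
  have i0 := (aux_sym_int (auxg_int 0)).const_mul (1 / 2)
  have i1 := (aux_sym_int (auxg_int 1)).const_mul (1 / 2)
  have i2 := (aux_sym_int (auxg_int 2)).const_mul (1 / 6)
  have i3 := (aux_sym_int auxgX_int).const_mul (1 / 4)
  have i01 : IntegrableOn (fun p => 1 / 2 * (auxg 0 p + auxg 0 (1 - p)) +
    1 / 2 * (auxg 1 p + auxg 1 (1 - p))) (Ioo (1 / 2) 1) := i0.add i1
  have i012 : IntegrableOn (fun p => 1 / 2 * (auxg 0 p + auxg 0 (1 - p)) +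
    1 / 2 * (auxg 1 p + auxg 1 (1 - p)) + 1 / 6 * (auxg 2 p + auxg 2 (1 - p)))
      (Ioo (1 / 2) 1) := i01.add i2
  unfold auxS
  rw [integral_add i012 i3, integral_add i01 i2, integral_add i0 i1]
  simp only [integral_const_mul]
  rw [aux_sym (auxg_int 0), aux_sym (auxg_int 1), aux_sym (auxg_int 2), aux_sym auxgX_int]
  have e0 := aux_E 0
  have e1 := aux_E 1
  have e2 := aux_E 2
  have e3 := aux_X
  have z2 : ∑' n : ℕ, 1 / (n + 1 : ℝ) ^ 2 = Real.pi ^ 2 / 6 := auxf_hasSum.tsum_eq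
  norm_num [Nat.factorial] at e0 e1 e2
  have z4 := aux_four_hasSum.tsum_eq
  have z3 := aux_zeta_three
  norm_num at z2 z3 z4
  simp only [auxg, auxgX]
  norm_num
  rw [e0, e1, e2, e3, z2, z3, z4]
  ring

lemma auxh_integral : ∫ p in Ioo (1 / 2 : ℝ) 1, auxh p
    = Real.pi ^ 4 / 80 + Real.pi ^ 2 / 12 - (riemannZeta 3).re + 1 / 2 - 2 * Real.log 2
      + 2 * Real.log 2 ^ 2 - 2 / 3 * Real.log 2 ^ 3 - Real.log 2 ^ 4 := by
  have hi : IntegrableOn (fun p => auxh p + auxS p) (Ioo (1 / 2) 1) := auxh_int.add auxS_int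
  have hc : ContinuousAt auxF (1 / 2) :=
    (auxF_deriv (by norm_num) (by norm_num)).continuousAt
  have := intervalIntegral.integral_eq_sub_of_hasDerivAt_of_tendsto
    (show (1 / 2 : ℝ) < 1 by norm_num) (f := auxF) (f' := fun p => auxh p + auxS p)
    (fun p hp => auxF_deriv (by linarith [hp.1]) hp.2)
    ((intervalIntegrable_iff_integrableOn_Ioo_of_le (by norm_num)).2 hi)
    (hc.tendsto.mono_left nhdsWithin_le_nhds) auxF_tendsto_one
  rw [intervalIntegral.integral_of_le (by norm_num), integral_Ioc_eq_integral_Ioo,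
    integral_add auxh_int auxS_int, auxS_integral, auxF_half] at this
  linarith

noncomputable def auxs (p : ℝ) : ℝ := - (1 / 2) * Real.log (p * (1 - p))

lemma auxs_exp {p : ℝ} (h0 : 1 / 2 < p) (h1 : p < 1) :
    Real.exp (-2 * auxs p) = p * (1 - p) := by
  have : 0 < p * (1 - p) := mul_pos (by linarith) (by linarith)
  rw [auxs, show -2 * (-(1 / 2) * Real.log (p * (1 - p))) = Real.log (p * (1 - p)) by ring,
    Real.exp_log this]

lemma auxs_exp' {p : ℝ} (h0 : 1 / 2 < p) (h1 : p < 1) :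
    Real.exp (2 * auxs p) = (p * (1 - p))⁻¹ := by
  rw [← auxs_exp h0 h1, ← Real.exp_neg]; ring_nf

lemma auxs_sqrt {p : ℝ} (h0 : 1 / 2 < p) :
    Real.sqrt (1 / 4 - p * (1 - p)) = p - 1 / 2 := by
  rw [show 1 / 4 - p * (1 - p) = (p - 1 / 2) ^ 2 by ring, Real.sqrt_sq (by linarith)]

lemma auxs_inj : InjOn auxs (Ioo (1 / 2) 1) := by
  rintro a ⟨ha, ha'⟩ b ⟨hb, hb'⟩ h
  have := auxs_sqrt ha
  rw [← auxs_exp ha ha', h, auxs_exp hb hb', auxs_sqrt hb] at this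
  linarith

lemma auxs_image : auxs '' Ioo (1 / 2) 1 = Ioi (Real.log 2) := by
  have e4 : Real.exp (-2 * Real.log 2) = 1 / 4 := by
    rw [show -2 * Real.log 2 = -(Real.log 2 + Real.log 2) by ring, Real.exp_neg, Real.exp_add,
      Real.exp_log two_pos]
    norm_num
  ext s
  constructor
  · rintro ⟨p, ⟨h0, h1⟩, rfl⟩
    have h : Real.exp (-2 * auxs p) < Real.exp (-2 * Real.log 2) := by
      rw [auxs_exp h0 h1, e4]
      nlinarith [sq_pos_of_pos (sub_pos.2 h0)]
    rw [Real.exp_lt_exp] at h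
    exact mem_Ioi.2 (by linarith)
  · intro hs
    have hs : Real.log 2 < s := hs
    have h : Real.exp (-2 * s) < 1 / 4 := by
      rw [← e4, Real.exp_lt_exp]; linarith
    have hp := Real.exp_pos (-2 * s)
    set r := Real.sqrt (1 / 4 - Real.exp (-2 * s)) with hr
    have hr0 : 0 < r := Real.sqrt_pos.2 (by linarith)
    have hr2 : r ^ 2 = 1 / 4 - Real.exp (-2 * s) := Real.sq_sqrt (by linarith)
    refine ⟨1 / 2 + r, ⟨by linarith, by nlinarith⟩, ?_⟩
    rw [auxs, show (1 / 2 + r) * (1 - (1 / 2 + r)) = Real.exp (-2 * s) by linarith [hr2, sq r],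
      Real.log_exp]
    ring

lemma auxs_deriv {p : ℝ} (h0 : 1 / 2 < p) (h1 : p < 1) :
    HasDerivAt auxs (1 / 2 * (1 / (1 - p) - 1 / p)) p := by
  have hQ : HasDerivAt (fun p : ℝ => 1 - p) (-1) p := by
    simpa using (hasDerivAt_id p).const_sub 1
  have hp : p ≠ 0 := by linarith
  have hq : 1 - p ≠ 0 := by linarith
  have := (((hasDerivAt_id p).fun_mul hQ).log (mul_ne_zero hp hq)).const_mul (-(1 / 2))
  refine this.congr_deriv ?_
  simp only [id]
  field_simp
  ring

noncomputable def auxG (s : ℝ) : ℝ := s ^ 2 * (-Real.exp (2 * s) + 2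
    + 2 * Real.exp (2 * s) * Real.sqrt (1 / 4 - Real.exp (-2 * s))
    - 4 * Real.log (1 / 2 + Real.sqrt (1 / 4 - Real.exp (-2 * s))))

lemma auxG_comp {p : ℝ} (h0 : 1 / 2 < p) (h1 : p < 1) :
    |1 / 2 * (1 / (1 - p) - 1 / p)| • auxG (auxs p) = auxh p := by
  have hp : 0 < p := by linarith
  have hq : 0 < 1 - p := by linarith
  have hpos : 0 ≤ 1 / 2 * (1 / (1 - p) - 1 / p) := by
    have : 1 / p ≤ 1 / (1 - p) := one_div_le_one_div_of_le hq (by linarith)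
    linarith
  rw [abs_of_nonneg hpos, auxG, auxs_exp h0 h1, auxs_exp' h0 h1, auxs_sqrt h0,
    add_sub_cancel, auxs, Real.log_mul hp.ne' hq.ne', auxh, smul_eq_mul]
  field_simp
  ring

lemma auxG_int : IntegrableOn auxG (Ioi (Real.log 2)) := by
  rw [← auxs_image, integrableOn_image_iff_integrableOn_abs_deriv_smul measurableSet_Ioo
    (fun p hp => (auxs_deriv hp.1 hp.2).hasDerivWithinAt) auxs_inj]
  exact auxh_int.congr_fun (fun p hp => (auxG_comp hp.1 hp.2).symm) measurableSet_Ioo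

lemma auxG_integral : ∫ s in Ioi (Real.log 2), auxG s = ∫ p in Ioo (1 / 2 : ℝ) 1, auxh p := by
  rw [← auxs_image, integral_image_eq_integral_abs_deriv_smul measurableSet_Ioo
    (fun p hp => (auxs_deriv hp.1 hp.2).hasDerivWithinAt) auxs_inj]
  exact setIntegral_congr_fun measurableSet_Ioo (fun p hp => auxG_comp hp.1 hp.2)

lemma aux_left_eq (x : ℝ) : (-x) ^ 2 * Real.exp (2 * -x)
    = x ^ ((3 : ℝ) - 1) * Real.exp (-(2 * x)) := by
  rw [show (3 : ℝ) - 1 = (2 : ℕ) by norm_num, Real.rpow_natCast]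
  ring_nf

lemma aux_left : ∫ s in Iic (0 : ℝ), s ^ 2 * Real.exp (2 * s) = 1 / 4 := by
  have h := integral_comp_neg_Iic 0 (fun x : ℝ => (-x) ^ 2 * Real.exp (2 * -x))
  simp only [neg_neg, neg_zero] at h
  rw [h]
  simp_rw [aux_left_eq]
  rw [Real.integral_rpow_mul_exp_neg_mul_Ioi (by norm_num) (by norm_num),
    show Real.Gamma 3 = 2 by
      rw [show (3 : ℝ) = ((2 : ℕ) : ℝ) + 1 by norm_num, Real.Gamma_nat_eq_factorial]
      norm_num [Nat.factorial]]
  norm_num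

lemma aux_left_int : IntegrableOn (fun s : ℝ => s ^ 2 * Real.exp (2 * s)) (Iic 0) := by
  by_contra hc
  have := integral_undef hc
  rw [aux_left] at this
  norm_num at this

lemma aux_mid (a : ℝ) : ∫ s in (0 : ℝ)..a, s ^ 2 * (-Real.exp (2 * s) + 2 + 4 * s)
    = -(Real.exp (2 * a) * (a ^ 2 / 2 - a / 2 + 1 / 4)) + 1 / 4 + 2 / 3 * a ^ 3 + a ^ 4 := by
  have hd : ∀ x ∈ uIcc 0 a, HasDerivAt (fun s : ℝ =>
      -(Real.exp (2 * s) * (s ^ 2 / 2 - s / 2 + 1 / 4)) + 2 / 3 * s ^ 3 + s ^ 4)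
      (x ^ 2 * (-Real.exp (2 * x) + 2 + 4 * x)) x := by
    intro x _
    have hx := hasDerivAt_id' x
    have h := ((((hx.const_mul 2).exp.fun_mul ((((hx.fun_pow 2).div_const 2).fun_sub
      (hx.div_const 2)).add_const (1 / 4))).fun_neg.fun_add
      ((hx.fun_pow 3).const_mul (2 / 3))).fun_add (hx.fun_pow 4))
    refine h.congr_deriv ?_
    push_cast
    ring
  rw [intervalIntegral.integral_eq_sub_of_hasDerivAt hd
    (Continuous.intervalIntegrable (by fun_prop) _ _)]
  simp
  ring

theorem etaLog_second_moment :
    (∫ s : ℝ, s ^ 2 * etaLog s) =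
      3 * Real.pi ^ 2 / 40 + 1 / 2 - 6 * (riemannZeta 3).re / Real.pi ^ 2 := by
  have ha : 0 < Real.log 2 := Real.log_pos one_lt_two
  set c : ℝ := 6 / Real.pi ^ 2 with hc
  have e1 : EqOn (fun s => c * (s ^ 2 * Real.exp (2 * s))) (fun s => s ^ 2 * etaLog s) (Iic 0) := by
    intro s hs
    have hs : s ≤ 0 := hs
    simp only [etaLog, if_pos hs, ← hc]
    ring
  have e2 : EqOn (fun s => c * (s ^ 2 * (-Real.exp (2 * s) + 2 + 4 * s)))
      (fun s => s ^ 2 * etaLog s) (Ioc 0 (Real.log 2)) := by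
    intro s hs
    simp only [etaLog, if_neg (not_le.2 hs.1), if_pos hs.2, ← hc]
    ring
  have e3 : EqOn (fun s => c * auxG s) (fun s => s ^ 2 * etaLog s) (Ioi (Real.log 2)) := by
    intro s hs
    have hs : Real.log 2 < s := hs
    simp only [etaLog, if_neg (not_le.2 hs), if_neg (not_le.2 (ha.trans hs)), ← hc, auxG]
    ring
  have i2' : IntegrableOn (fun s : ℝ => s ^ 2 * (-Real.exp (2 * s) + 2 + 4 * s))
      (Ioc 0 (Real.log 2)) :=
    (Continuous.integrableOn_Icc (by fun_prop)).mono_set Ioc_subset_Icc_self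
  have i1 : IntegrableOn (fun s => s ^ 2 * etaLog s) (Iic 0) :=
    IntegrableOn.congr_fun (aux_left_int.const_mul c) e1 measurableSet_Iic
  have i2 : IntegrableOn (fun s => s ^ 2 * etaLog s) (Ioc 0 (Real.log 2)) :=
    IntegrableOn.congr_fun (i2'.const_mul c) e2 measurableSet_Ioc
  have i3 : IntegrableOn (fun s => s ^ 2 * etaLog s) (Ioi (Real.log 2)) :=
    IntegrableOn.congr_fun (auxG_int.const_mul c) e3 measurableSet_Ioi
  have hu : Iic (0 : ℝ) ∪ (Ioc 0 (Real.log 2) ∪ Ioi (Real.log 2)) = univ := by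
    rw [Ioc_union_Ioi_eq_Ioi ha.le, Iic_union_Ioi]
  rw [← setIntegral_univ, ← hu, setIntegral_union (by
      rw [Ioc_union_Ioi_eq_Ioi ha.le]; exact Iic_disjoint_Ioi le_rfl)
      (measurableSet_Ioc.union measurableSet_Ioi) i1 (i2.union i3),
    setIntegral_union (Ioc_disjoint_Ioi le_rfl) measurableSet_Ioi i2 i3,
    ← setIntegral_congr_fun measurableSet_Iic e1, ← setIntegral_congr_fun measurableSet_Ioc e2,
    ← setIntegral_congr_fun measurableSet_Ioi e3, integral_const_mul, integral_const_mul,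
    integral_const_mul, aux_left, ← intervalIntegral.integral_of_le ha.le, aux_mid, auxG_integral,
    auxh_integral, show Real.exp (2 * Real.log 2) = 4 by
      rw [two_mul, Real.exp_add, Real.exp_log two_pos]; norm_num, hc]
  have hpi : Real.pi ≠ 0 := Real.pi_ne_zero
  field_simp
  ring
end

section
/- The third moment of η_log satisfies μ_3 = ∫_ℝ s³·η_log(s) ds = (9/π² − 3/2)·ζ(3) + (27/π²)·ζ(5) − 3/4 − 9π²/80, where ζ is the Riemann zeta function. -/
open MeasureTheory

namespace EtaAux
open Filter Topology Set

/-- zeta-type sum -/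
noncomputable def Z (k : ℕ) : ℝ := ∑' n : ℕ, 1 / ((n : ℝ) + 1) ^ k

/-- double sum -/
noncomputable def D (i j : ℕ) : ℝ :=
  ∑' p : ℕ × ℕ, 1 / (((p.1 : ℝ) + 1) ^ i * ((p.1 : ℝ) + p.2 + 2) ^ j)

/-- partial sums -/
noncomputable def hh (i n : ℕ) : ℝ := ∑ k ∈ Finset.range n, 1 / ((k : ℝ) + 1) ^ i

lemma hasSum_Z {k : ℕ} (hk : 2 ≤ k) : HasSum (fun n : ℕ => 1 / ((n : ℝ) + 1) ^ k) (Z k) := by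
  apply Summable.hasSum
  have := (summable_nat_add_iff 1).2 (Real.summable_one_div_nat_pow.2 (by omega : 1 < k))
  simpa using this

lemma summable_base : Summable (fun p : ℕ × ℕ =>
    1 / (((p.1 : ℝ) + 1) * ((p.2 : ℝ) + 1) * ((p.1 : ℝ) + p.2 + 2))) := by
  have h1 : Summable (fun n : ℕ => 1 / ((n : ℝ) + 1) ^ (3 / 2 : ℝ)) := by
    have := (summable_nat_add_iff 1).2 (Real.summable_one_div_nat_rpow.2 (by norm_num : (1 : ℝ) < 3 / 2))
    simpa using this
  have h2 := h1.mul_of_nonneg h1 (fun n => by positivity) (fun n => by positivity)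
  refine Summable.of_nonneg_of_le (fun p => by positivity) (fun p => ?_) h2
  obtain ⟨m, n⟩ := p
  simp only
  rw [← one_div_mul_one_div_rev, one_div_mul_one_div_rev, one_div_mul_one_div_rev]
  apply one_div_le_one_div_of_le (by positivity)
  have e : ∀ x : ℝ, 0 < x → x ^ (3 / 2 : ℝ) = x * √x := by
    intro x hx
    rw [show (3 / 2 : ℝ) = 1 + 1 / 2 by norm_num, Real.rpow_add hx, Real.rpow_one, Real.sqrt_eq_rpow]
  have hm : (0 : ℝ) < m + 1 := by positivity
  have hn : (0 : ℝ) < n + 1 := by positivity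
  rw [e _ hm, e _ hn]
  have k1 := Real.sq_sqrt hm.le
  have k2 := Real.sq_sqrt hn.le
  have k3 : √((m : ℝ) + 1) * √((n : ℝ) + 1) ≤ (m : ℝ) + n + 2 := by
    nlinarith [sq_nonneg (√((m : ℝ) + 1) - √((n : ℝ) + 1)), Real.sqrt_nonneg ((m : ℝ) + 1),
      Real.sqrt_nonneg ((n : ℝ) + 1)]
  have := mul_le_mul_of_nonneg_left k3 (mul_pos hm hn).le
  nlinarith [this]

lemma summable_of_bound (f : ℕ × ℕ → ℝ) (h0 : ∀ p, 0 ≤ f p)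
    (h : ∀ p : ℕ × ℕ, f p ≤ 1 / (((p.1 : ℝ) + 1) * ((p.2 : ℝ) + 1) * ((p.1 : ℝ) + p.2 + 2))) :
    Summable f := Summable.of_nonneg_of_le h0 h summable_base

lemma hasSum_D {i j : ℕ} (hi : 1 ≤ i) (hj : 2 ≤ j) : HasSum (fun p : ℕ × ℕ =>
    1 / (((p.1 : ℝ) + 1) ^ i * ((p.1 : ℝ) + p.2 + 2) ^ j)) (D i j) := by
  apply Summable.hasSum
  apply summable_of_bound _ (fun p => by positivity)
  rintro ⟨m, n⟩
  apply one_div_le_one_div_of_le (by positivity)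
  simp only
  have hm : (1 : ℝ) ≤ (m : ℝ) + 1 := by simp
  have hn : (1 : ℝ) ≤ (m : ℝ) + n + 2 := by
    have : (0 : ℝ) ≤ (m : ℝ) + n := by positivity
    linarith
  have a1 : ((m : ℝ) + 1) ≤ ((m : ℝ) + 1) ^ i := by
    simpa using pow_le_pow_right₀ hm hi
  have a2 := pow_le_pow_right₀ hn hj
  calc ((m : ℝ) + 1) * ((n : ℝ) + 1) * ((m : ℝ) + n + 2)
      ≤ ((m : ℝ) + 1) * ((m : ℝ) + n + 2) ^ 2 := by
        have : (0 : ℝ) ≤ (m : ℝ) := by positivity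
        have : (0 : ℝ) ≤ (n : ℝ) := by positivity
        rw [mul_assoc]
        apply mul_le_mul_of_nonneg_left _ (by positivity)
        nlinarith
    _ ≤ _ := by gcongr

lemma hasSum_hh {i j : ℕ} (hi : 1 ≤ i) (hj : 2 ≤ j) :
    HasSum (fun n : ℕ => hh i n / ((n : ℝ) + 1) ^ j) (D i j) := by
  have h := (Finset.HasAntidiagonal.sigmaAntidiagonalEquivProd (A := ℕ)).hasSum_iff.2 (hasSum_D hi hj)
  have h2 := h.sigma (fun n => hasSum_fintype _)
  have h3 : HasSum (fun n : ℕ => hh i (n + 1) / (((n + 1 : ℕ) : ℝ) + 1) ^ j) (D i j) := by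
    convert h2 using 2 with n
    rw [Finset.univ_eq_attach]
    simp only [Function.comp, Finset.HasAntidiagonal.sigmaAntidiagonalEquivProd]
    simp only [Equiv.coe_fn_mk]
    rw [Finset.sum_attach (Finset.HasAntidiagonal.antidiagonal n)
      (fun p : ℕ × ℕ => 1 / (((p.1 : ℝ) + 1) ^ i * ((p.1 : ℝ) + p.2 + 2) ^ j)),
      Finset.Nat.sum_antidiagonal_eq_sum_range_succ_mk, hh, Finset.sum_div]
    apply Finset.sum_congr rfl
    intro k hk
    have : k ≤ n := by simpa [Nat.lt_succ_iff] using hk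
    push_cast [Nat.cast_sub this]
    rw [div_div]
    congr 3
    ring
  have h4 := (hasSum_nat_add_iff (f := fun n : ℕ => hh i n / ((n : ℝ) + 1) ^ j) 1).1 h3
  simpa [hh] using h4

lemma stuffle {i j : ℕ} (hi : 2 ≤ i) (hj : 2 ≤ j) : Z i * Z j = D i j + D j i + Z (i + j) := by
  have h1 : HasSum (fun m : ℕ => 1 / ((m : ℝ) + 1) ^ i * Z j) (Z i * Z j) := (hasSum_Z hi).mul_right _
  have hD := hasSum_D (by omega : 1 ≤ i) hj
  have h2 := hD.prod_fiberwise (fun m => (hD.summable.prod_factor m).hasSum)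
  have h3 := (h2.add (hasSum_hh (by omega : 1 ≤ j) hi)).add (hasSum_Z (by omega : 2 ≤ i + j))
  refine h1.unique ?_
  convert h3 using 2 with m
  have e := (hasSum_Z hj).summable.sum_add_tsum_nat_add (m + 1)
  rw [Finset.sum_range_succ] at e
  change _ = Z j at e
  rw [← e]
  simp only
  have e2 : ∑' c : ℕ, 1 / (((m : ℝ) + 1) ^ i * ((m : ℝ) + c + 2) ^ j)
      = 1 / ((m : ℝ) + 1) ^ i * ∑' n : ℕ, 1 / (((n + (m + 1) : ℕ) : ℝ) + 1) ^ j := by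
    rw [← tsum_mul_left]
    congr 1
    ext c
    push_cast
    rw [one_div_mul_one_div]
    congr 3
    ring
  rw [e2, hh, pow_add]
  field_simp
  ring

lemma telesc (m : ℕ) : HasSum (fun n : ℕ => 1 / ((n : ℝ) + 1) - 1 / ((n : ℝ) + m + 1)) (hh 1 m) := by
  induction m with
  | zero => simp [hh]
  | succ m ih =>
    have h : HasSum (fun n : ℕ => 1 / ((n : ℝ) + m + 1) - 1 / (((n + 1 : ℕ) : ℝ) + m + 1))
        (1 / ((m : ℝ) + 1)) := by
      rw [hasSum_iff_tendsto_nat_of_nonneg]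
      · simp_rw [Finset.sum_range_sub' (fun n : ℕ => 1 / ((n : ℝ) + m + 1))]
        have : Tendsto (fun n : ℕ => 1 / ((n : ℝ) + m + 1)) atTop (𝓝 0) := by
          have := (tendsto_add_atTop_iff_nat m).2 (tendsto_one_div_add_atTop_nhds_zero_nat (𝕜 := ℝ))
          simpa using this
        simpa using this.const_sub (1 / ((m : ℝ) + 1))
      · intro n
        rw [sub_nonneg]
        apply one_div_le_one_div_of_le (by positivity)
        push_cast; linarith
    have h2 := ih.add h
    have e : hh 1 (m + 1) = hh 1 m + 1 / ((m : ℝ) + 1) := by simp [hh, Finset.sum_range_succ]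
    rw [e]
    convert h2 using 2 with n
    push_cast
    ring

lemma hasSum_T {i : ℕ} (hi : 1 ≤ i) : HasSum (fun p : ℕ × ℕ =>
    1 / (((p.1 : ℝ) + 1) ^ i * ((p.2 : ℝ) + 1) * ((p.1 : ℝ) + p.2 + 2)))
    (D 1 (i + 1) + Z (i + 2)) := by
  have hs : Summable (fun p : ℕ × ℕ =>
    1 / (((p.1 : ℝ) + 1) ^ i * ((p.2 : ℝ) + 1) * ((p.1 : ℝ) + p.2 + 2))) := by
    apply summable_of_bound _ (fun p => by positivity)
    rintro ⟨m, n⟩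
    apply one_div_le_one_div_of_le (by positivity)
    have hm : (1 : ℝ) ≤ (m : ℝ) + 1 := by simp
    have a1 : ((m : ℝ) + 1) ≤ ((m : ℝ) + 1) ^ i := by
      simpa using pow_le_pow_right₀ hm hi
    simp only
    gcongr
  have h2 := hs.hasSum.prod_fiberwise (g := fun m : ℕ => hh 1 (m + 1) / ((m : ℝ) + 1) ^ (i + 1)) (by
    intro m
    have := (telesc (m + 1)).mul_right (1 / ((m : ℝ) + 1) ^ (i + 1))
    rw [mul_one_div] at this
    convert! this using 2 with n
    push_cast
    have : (n : ℝ) + (m + 1) + 1 ≠ 0 := by positivity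
    have : (m : ℝ) + n + 2 ≠ 0 := by positivity
    rw [pow_succ]
    field_simp
    ring)
  have h3 := (hasSum_hh (le_refl 1) (by omega : 2 ≤ i + 1)).add (hasSum_Z (by omega : 2 ≤ i + 2))
  have : (∑' p : ℕ × ℕ, 1 / (((p.1 : ℝ) + 1) ^ i * ((p.2 : ℝ) + 1) * ((p.1 : ℝ) + p.2 + 2)))
     = D 1 (i + 1) + Z (i + 2) := by
    refine h2.unique ?_
    convert h3 using 2 with m
    have e : hh 1 (m + 1) = hh 1 m + 1 / ((m : ℝ) + 1) := by simp [hh, Finset.sum_range_succ]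
    rw [e]
    field_simp
    ring
  rw [← this]
  exact hs.hasSum

lemma hasSum_D' {j : ℕ} (hj : 2 ≤ j) : HasSum (fun p : ℕ × ℕ =>
    1 / (((p.2 : ℝ) + 1) * ((p.1 : ℝ) + p.2 + 2) ^ j)) (D 1 j) := by
  have := (Equiv.prodComm ℕ ℕ).hasSum_iff.2 (hasSum_D (le_refl 1) hj)
  convert this using 2 with p
  simp [add_comm]

lemma hasSum_M {j : ℕ} (hj : 1 ≤ j) : HasSum (fun p : ℕ × ℕ =>
    1 / (((p.1 : ℝ) + 1) * ((p.2 : ℝ) + 1) * ((p.1 : ℝ) + p.2 + 2) ^ j)) (2 * D 1 (j + 1)) := by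
  have := (hasSum_D' (by omega : 2 ≤ j + 1)).add (hasSum_D (le_refl 1) (by omega : 2 ≤ j + 1))
  rw [← two_mul] at this
  convert this using 2 with p
  have : (p.1 : ℝ) + p.2 + 2 ≠ 0 := by positivity
  field_simp
  ring

lemma sumformula5 : D 1 4 + Z 5 = D 3 2 + D 2 3 + D 1 4 + D 1 4 := by
  have h := (((hasSum_D (by omega : 1 ≤ 3) (by omega : 2 ≤ 2)).add
    (hasSum_D (by omega : 1 ≤ 2) (by omega : 2 ≤ 3))).add
    (hasSum_D (by omega : 1 ≤ 1) (by omega : 2 ≤ 4))).add (hasSum_D' (by omega : 2 ≤ 4))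
  refine (hasSum_T (by omega : 1 ≤ 3)).unique ?_
  convert h using 2 with p
  have : (p.1 : ℝ) + p.2 + 2 ≠ 0 := by positivity
  field_simp
  ring

lemma sumformula4 : D 1 3 + Z 4 = D 2 2 + D 1 3 + D 1 3 := by
  have h := ((hasSum_D (by omega : 1 ≤ 2) (by omega : 2 ≤ 2)).add
    (hasSum_D (by omega : 1 ≤ 1) (by omega : 2 ≤ 3))).add (hasSum_D' (by omega : 2 ≤ 3))
  refine (hasSum_T (by omega : 1 ≤ 2)).unique ?_
  convert h using 2 with p
  have : (p.1 : ℝ) + p.2 + 2 ≠ 0 := by positivity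
  field_simp
  ring

lemma Z2 : Z 2 = Real.pi ^ 2 / 6 := by
  have := (hasSum_nat_add_iff (f := fun n : ℕ => (1 : ℝ) / (n : ℝ) ^ 2) 1).1
    (by simpa using hasSum_Z (le_refl 2))
  simpa using this.unique hasSum_zeta_two

lemma Z4 : Z 4 = Real.pi ^ 4 / 90 := by
  have := (hasSum_nat_add_iff (f := fun n : ℕ => (1 : ℝ) / (n : ℝ) ^ 4) 1).1
    (by simpa using hasSum_Z (by omega : 2 ≤ 4))
  simpa using this.unique hasSum_zeta_four

lemma zeta_re {k : ℕ} (hk : 2 ≤ k) : (riemannZeta k).re = Z k := by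
  have h := (hasSum_nat_add_iff (f := fun n : ℕ => (1 : ℝ) / (n : ℝ) ^ k) 1).1
    (by simpa using hasSum_Z hk)
  have h2 : HasSum (fun n : ℕ => (1 : ℂ) / (n : ℂ) ^ k) ((Z k : ℝ) : ℂ) := by
    have := Complex.hasSum_ofReal.2 h
    have hk0 : k ≠ 0 := by omega
    simpa [hk0] using this
  rw [zeta_nat_eq_tsum_of_gt_one (by omega), h2.tsum_eq, Complex.ofReal_re]

lemma D13 : D 1 3 = Z 4 / 4 := by
  have h1 := sumformula4
  have h2 := stuffle (le_refl 2) (le_refl 2)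
  have h3 : Z 2 * Z 2 = 5 / 2 * Z 4 := by rw [Z2, Z4]; ring
  norm_num at h2
  linarith

lemma D14 : D 1 4 = 2 * Z 5 - Z 2 * Z 3 := by
  have h1 := sumformula5
  have h2 := stuffle (le_refl 2) (by omega : 2 ≤ 3)
  norm_num at h2
  linarith

end EtaAux

namespace EtaAux
open Filter Topology Set

/-- minus log x -/
noncomputable def lA (x : ℝ) : ℝ := -Real.log x
/-- minus log (1 - x) -/
noncomputable def lB (x : ℝ) : ℝ := -Real.log (1 - x)

lemma lA_flip (x : ℝ) : lA (1 - x) = lB x := rfl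
lemma lB_flip (x : ℝ) : lB (1 - x) = lA x := by simp [lA, lB]

lemma lA_nonneg {x : ℝ} (hx : x ∈ Ioo (0 : ℝ) 1) : 0 ≤ lA x := by
  have := Real.log_nonpos hx.1.le hx.2.le
  simp only [lA]; linarith

lemma lB_nonneg {x : ℝ} (hx : x ∈ Ioo (0 : ℝ) 1) : 0 ≤ lB x := by
  have := lA_nonneg (x := 1 - x) ⟨by linarith [hx.2], by linarith [hx.1]⟩
  rwa [lA_flip] at this

lemma lA_le {x : ℝ} (hx : 0 < x) : lA x ≤ (1 - x) / x := by
  have := Real.one_sub_inv_le_log_of_pos hx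
  simp only [lA]
  have e : (1 - x) / x = x⁻¹ - 1 := by field_simp
  linarith

lemma lB_le {x : ℝ} (hx : x < 1) : lB x ≤ x / (1 - x) := by
  have := lA_le (x := 1 - x) (by linarith)
  rw [lA_flip] at this
  simpa using this

lemma measA : Measurable lA := by unfold lA; fun_prop
lemma measB : Measurable lB := by unfold lB; fun_prop

lemma derivA {x : ℝ} (hx : x ∈ Ioo (0 : ℝ) 1) : HasDerivAt lA (-(1 / x)) x := by
  have := (Real.hasDerivAt_log hx.1.ne').neg
  rw [one_div]; exact this

lemma derivB {x : ℝ} (hx : x ∈ Ioo (0 : ℝ) 1) : HasDerivAt lB (1 / (1 - x)) x := by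
  have h1 : HasDerivAt (fun y : ℝ => 1 - y) (-1) x := by
    simpa using (hasDerivAt_id x).const_sub 1
  have h := (h1.log (by linarith [hx.2])).neg
  convert! h using 1
  ring

lemma image_exp : (fun t : ℝ => Real.exp (-t)) '' Ioi 0 = Ioo 0 1 := by
  ext x
  constructor
  · rintro ⟨t, ht, rfl⟩
    exact ⟨Real.exp_pos _, by simpa using ht⟩
  · rintro ⟨h0, h1⟩
    exact ⟨-Real.log x, by simpa using Real.log_neg h0 h1, by simp [Real.exp_log h0]⟩

lemma int_pow_log (k i : ℕ) : IntegrableOn (fun x : ℝ => x ^ k * lA x ^ i) (Ioo 0 1) ∧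
    ∫ x in Ioo (0 : ℝ) 1, x ^ k * lA x ^ i = (i.factorial : ℝ) / ((k : ℝ) + 1) ^ (i + 1) := by
  have e : ∫ x in Ioo (0 : ℝ) 1, x ^ k * lA x ^ i = (i.factorial : ℝ) / ((k : ℝ) + 1) ^ (i + 1) := by
    rw [← image_exp, integral_image_eq_integral_abs_deriv_smul (f' := fun t => -Real.exp (-t))
      measurableSet_Ioi]
    · have h := Real.integral_rpow_mul_exp_neg_mul_Ioi (a := (i : ℝ) + 1) (r := (k : ℝ) + 1)
        (by positivity) (by positivity)
      rw [Real.Gamma_nat_eq_factorial] at h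
      have h2 : (1 / ((k : ℝ) + 1)) ^ ((i : ℝ) + 1) * (i.factorial : ℝ)
          = (i.factorial : ℝ) / ((k : ℝ) + 1) ^ (i + 1) := by
        have : ((i : ℝ) + 1) = ((i + 1 : ℕ) : ℝ) := by push_cast; ring
        rw [this, Real.rpow_natCast, one_div_pow]; ring
      rw [← h2, ← h]
      apply setIntegral_congr_fun measurableSet_Ioi
      intro t ht
      simp only [smul_eq_mul, abs_neg, abs_of_pos (Real.exp_pos _), lA, Real.log_exp, neg_neg,
        add_sub_cancel_right, Real.rpow_natCast]
      rw [show -(((k : ℝ) + 1) * t) = (k : ℝ) * (-t) + -t by ring, Real.exp_add, Real.exp_nat_mul]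
      ring
    · intro t ht
      have := ((hasDerivAt_id t).neg).exp
      simpa using this.hasDerivWithinAt
    · intro a _ b _ h
      simpa using h
  refine ⟨?_, e⟩
  apply Integrable.of_integral_ne_zero
  rw [e]
  positivity

lemma intOn_flip {f : ℝ → ℝ} (h : IntegrableOn f (Ioo 0 1)) :
    IntegrableOn (fun x => f (1 - x)) (Ioo 0 1) := by
  rw [← intervalIntegrable_iff_integrableOn_Ioo_of_le zero_le_one] at h ⊢
  simpa using (h.comp_sub_left 1).symm

lemma intA (n : ℕ) : IntegrableOn (fun x : ℝ => lA x ^ n) (Ioo 0 1) := by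
  simpa using (int_pow_log 0 n).1

lemma intB (n : ℕ) : IntegrableOn (fun x : ℝ => lB x ^ n) (Ioo 0 1) := by
  simpa [lA_flip] using intOn_flip (intA n)

lemma intU (n : ℕ) : IntegrableOn (fun x : ℝ => (lA x + lB x) ^ n) (Ioo 0 1) := by
  have h := ((intA n).add (intB n)).const_mul ((2 : ℝ) ^ (n - 1))
  refine Integrable.mono' h (by have := measA; have := measB; fun_prop) ?_
  refine (ae_restrict_iff' measurableSet_Ioo).2 (ae_of_all _ fun x hx => ?_)
  have a := lA_nonneg hx
  have b := lB_nonneg hx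
  rw [Real.norm_of_nonneg (by positivity)]
  exact add_pow_le a b n

lemma intAB (i j : ℕ) : IntegrableOn (fun x : ℝ => lA x ^ i * lB x ^ (j + 1) / x) (Ioo 0 1) := by
  have h := ((intU (i + j)).add (intU (i + j + 1))).const_mul 2
  refine Integrable.mono' h (((measA.pow_const i).mul (measB.pow_const (j + 1))).div measurable_id).aestronglyMeasurable ?_
  refine (ae_restrict_iff' measurableSet_Ioo).2 (ae_of_all _ fun x hx => ?_)
  have a := lA_nonneg hx
  have b := lB_nonneg hx
  have x0 := hx.1
  rw [Real.norm_of_nonneg (by positivity)]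
  have key : lB x / x ≤ 2 * (1 + lB x) := by
    rw [div_le_iff₀ x0]
    rcases le_total x (1 / 2) with h | h
    · have := lB_le hx.2
      have h2 : x / (1 - x) ≤ 2 * x := by
        rw [div_le_iff₀ (by linarith [hx.2])]; nlinarith
      nlinarith
    · nlinarith
  have h1 : lA x ^ i ≤ (lA x + lB x) ^ i := by gcongr; linarith
  have h2 : lB x ^ j ≤ (lA x + lB x) ^ j := by gcongr; linarith
  calc lA x ^ i * lB x ^ (j + 1) / x = lA x ^ i * lB x ^ j * (lB x / x) := by ring
    _ ≤ (lA x + lB x) ^ i * (lA x + lB x) ^ j * (2 * (1 + (lA x + lB x))) := by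
        gcongr
        exact key.trans (by linarith)
    _ = _ := by simp only [Pi.add_apply]; ring

lemma series {ι : Type} [Countable ι] (c : ι → ℝ) (e : ι → ℕ) (i : ℕ) (hc : ∀ k, 0 ≤ c k)
    (f : ℝ → ℝ)
    (hpt : ∀ x ∈ Ioo (0 : ℝ) 1, HasSum (fun k => c k * (x ^ e k * lA x ^ i)) (f x))
    (S : ℝ) (hS : HasSum (fun k => c k * ((i.factorial : ℝ) / ((e k : ℝ) + 1) ^ (i + 1))) S) :
    ∫ x in (0 : ℝ)..1, f x = S := by
  rw [intervalIntegral.integral_of_le zero_le_one, integral_Ioc_eq_integral_Ioo]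
  have h := hasSum_integral_of_summable_integral_norm (μ := volume.restrict (Ioo (0 : ℝ) 1))
    (F := fun k x => c k * (x ^ e k * lA x ^ i)) (fun k => (int_pow_log (e k) i).1.const_mul (c k)) ?_
  · simp only [integral_const_mul, (int_pow_log _ i).2] at h
    rw [← h.unique hS]
    apply setIntegral_congr_fun measurableSet_Ioo
    intro x hx
    exact (hpt x hx).tsum_eq.symm
  · convert hS.summable using 2 with k
    rw [← (int_pow_log (e k) i).2, ← integral_const_mul]
    apply setIntegral_congr_fun measurableSet_Ioo
    intro x hx
    have a := lA_nonneg hx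
    have x0 := hx.1
    have := hc k
    simp only
    rw [Real.norm_of_nonneg (by positivity)]

lemma hasSum_B {x : ℝ} (hx : x ∈ Ioo (0 : ℝ) 1) :
    HasSum (fun n : ℕ => x ^ (n + 1) / ((n : ℝ) + 1)) (lB x) := by
  apply Real.hasSum_pow_div_log_of_abs_lt_one
  rw [abs_of_pos hx.1]; exact hx.2

lemma val_AB (i : ℕ) : ∫ x in (0 : ℝ)..1, lA x ^ i * lB x / x = i.factorial * Z (i + 2) := by
  apply series (ι := ℕ) (fun k => 1 / ((k : ℝ) + 1)) (fun k => k) i (fun k => by positivity)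
  · intro x hx
    have h := (hasSum_B hx).mul_left (lA x ^ i / x)
    have x0 := hx.1.ne'
    convert! h using 1
    · funext k
      rw [pow_succ]
      field_simp
    · ring
  · convert! (hasSum_Z (by omega : 2 ≤ i + 2)).mul_left (i.factorial : ℝ) using 1
    funext k
    field_simp
    ring

lemma val_A' (j : ℕ) (hj : 1 ≤ j) :
    ∫ x in (0 : ℝ)..1, lA x ^ j / (1 - x) = j.factorial * Z (j + 1) := by
  apply series (ι := ℕ) (fun k => 1) (fun k => k) j (fun k => by positivity)
  · intro x hx
    have h := (hasSum_geometric_of_lt_one hx.1.le hx.2).mul_right (lA x ^ j)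
    convert! h using 1
    · simp
    · ring
  · convert! (hasSum_Z (by omega : 2 ≤ j + 1)).mul_left (j.factorial : ℝ) using 1
    funext k
    field_simp

lemma val_B (j : ℕ) (hj : 1 ≤ j) :
    ∫ x in (0 : ℝ)..1, lB x ^ j / x = j.factorial * Z (j + 1) := by
  rw [← val_A' j hj]
  have := intervalIntegral.integral_comp_sub_left (a := 0) (b := 1) (fun x => lA x ^ j / (1 - x)) 1
  simpa [lA_flip] using this

lemma val_ABB (i : ℕ) :
    ∫ x in (0 : ℝ)..1, lA x ^ i * lB x ^ 2 / x = i.factorial * (2 * D 1 (i + 2)) := by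
  apply series (ι := ℕ × ℕ) (fun p => 1 / (((p.1 : ℝ) + 1) * ((p.2 : ℝ) + 1)))
    (fun p => p.1 + p.2 + 1) i (fun k => by positivity)
  · intro x hx
    have h0 := hasSum_B hx
    have hx0 := hx.1
    have x0 := hx.1.ne'
    have h := (h0.mul h0 (h0.summable.mul_of_nonneg h0.summable (fun n => by positivity)
      (fun n => by positivity))).mul_left (lA x ^ i / x)
    convert! h using 1
    · funext k
      field_simp
      ring
    · ring
  · convert! (hasSum_M (by omega : 1 ≤ i + 1)).mul_left (i.factorial : ℝ) using 1
    funext k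
    push_cast
    rw [show (k.1 : ℝ) + k.2 + 1 + 1 = k.1 + k.2 + 2 by ring]
    have : (k.1 : ℝ) + k.2 + 2 ≠ 0 := by positivity
    field_simp

/-! limits -/

lemma lim_xA (k : ℕ) : Tendsto (fun x => x * lA x ^ k) (𝓝[>] 0) (𝓝 0) := by
  have h1 : Tendsto lA (𝓝[>] 0) atTop := tendsto_neg_atBot_atTop.comp Real.tendsto_log_nhdsGT_zero
  have h2 := (Real.tendsto_pow_mul_exp_neg_atTop_nhds_zero k).comp h1
  refine h2.congr' ?_
  filter_upwards [self_mem_nhdsWithin] with x hx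
  simp only [Function.comp, lA, neg_neg]
  rw [Real.exp_log hx]; ring

lemma ev0 : ∀ᶠ x : ℝ in 𝓝[>] 0, x ∈ Ioo (0 : ℝ) (1 / 2) :=
  Ioo_mem_nhdsGT (by norm_num)

lemma lim_BA (k : ℕ) : Tendsto (fun x => lB x * lA x ^ k) (𝓝[>] 0) (𝓝 0) := by
  have h := (lim_xA k).const_mul 2
  rw [mul_zero] at h
  refine squeeze_zero' ?_ ?_ h
  · filter_upwards [ev0] with x hx
    have hx' : x ∈ Ioo (0 : ℝ) 1 := ⟨hx.1, by linarith [hx.2]⟩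
    have := lA_nonneg hx'
    have := lB_nonneg hx'
    positivity
  · filter_upwards [ev0] with x hx
    have hx' : x ∈ Ioo (0 : ℝ) 1 := ⟨hx.1, by linarith [hx.2]⟩
    have := lA_nonneg hx'
    rw [← mul_assoc]
    gcongr
    refine (lB_le hx'.2).trans ?_
    rw [div_le_iff₀ (by linarith [hx'.2])]
    nlinarith [hx.1, hx.2]

lemma tend_flip : Tendsto (fun x : ℝ => 1 - x) (𝓝[<] 1) (𝓝[>] 0) := by
  apply tendsto_nhdsWithin_iff.2
  constructor
  · have : Tendsto (fun x : ℝ => 1 - x) (𝓝 1) (𝓝 (1 - 1)) := by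
      exact (continuous_const.sub continuous_id).tendsto 1
    rw [sub_self] at this
    exact this.mono_left nhdsWithin_le_nhds
  · filter_upwards [self_mem_nhdsWithin] with x hx
    simpa using hx

lemma lim_AB (k : ℕ) : Tendsto (fun x => lA x * lB x ^ k) (𝓝[<] 1) (𝓝 0) := by
  have := (lim_BA k).comp tend_flip
  simpa [Function.comp_def, lA_flip, lB_flip] using this

lemma lim_xB (k : ℕ) : Tendsto (fun x => (1 - x) * lB x ^ k) (𝓝[<] 1) (𝓝 0) := by
  have := (lim_xA k).comp tend_flip
  simpa [Function.comp_def, lA_flip, lB_flip] using this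

lemma lim_A : Tendsto lA (𝓝[<] 1) (𝓝 0) := by simpa using lim_AB 0

lemma lim_B0 : Tendsto lB (𝓝[>] 0) (𝓝 0) := by simpa using lim_BA 0

lemma intAB' (i j : ℕ) : IntegrableOn (fun x : ℝ => lA x ^ (i + 1) * lB x ^ j / (1 - x)) (Ioo 0 1) := by
  have := intOn_flip (intAB j i)
  simpa [lA_flip, lB_flip, mul_comm] using this

lemma toII {f : ℝ → ℝ} (h : IntegrableOn f (Ioo 0 1)) : IntervalIntegrable f volume 0 1 :=
  (intervalIntegrable_iff_integrableOn_Ioo_of_le zero_le_one).2 h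

lemma val_ABBB : ∫ x in (0 : ℝ)..1, lA x ^ 1 * lB x ^ 3 / x =
    3 / 2 * ∫ x in (0 : ℝ)..1, lA x ^ 2 * lB x ^ 2 / x := by
  have i1 := toII (intAB 1 2)
  have i2 := toII (intAB' 1 2)
  norm_num only at i1 i2
  have h := intervalIntegral.integral_eq_sub_of_hasDerivAt_of_tendsto (a := 0) (b := 1) zero_lt_one
    (f := fun x => lA x ^ 2 * lB x ^ 3)
    (f' := fun x => 3 * (lA x ^ 2 * lB x ^ 2 / (1 - x)) - 2 * (lA x ^ 1 * lB x ^ 3 / x)) (fa := 0) (fb := 0)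
    (by
      intro x hx
      have := ((derivA hx).pow 2).mul ((derivB hx).pow 3)
      convert! this using 1
      simp
      ring)
    ((i2.const_mul 3).sub (i1.const_mul 2))
    (by
      have := (lim_BA 2).mul (lim_B0.pow 2)
      norm_num at this
      refine this.congr fun x => ?_
      ring)
    (by
      have := (lim_AB 3).mul lim_A
      norm_num at this
      refine this.congr fun x => ?_
      ring)
  rw [intervalIntegral.integral_sub (i2.const_mul 3) (i1.const_mul 2),
    intervalIntegral.integral_const_mul, intervalIntegral.integral_const_mul] at h
  have e := intervalIntegral.integral_comp_sub_left (a := 0) (b := 1)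
    (fun x => lA x ^ 2 * lB x ^ 2 / x) 1
  simp only [lA_flip, lB_flip, sub_self, sub_zero] at e
  have e' : ∀ x : ℝ, lB x ^ 2 * lA x ^ 2 / (1 - x) = lA x ^ 2 * lB x ^ 2 / (1 - x) := fun x => by ring
  simp only [e'] at e
  rw [e] at h
  linarith

/-- the integrals K_n -/
noncomputable def kf (n : ℕ) (x : ℝ) : ℝ := ((lA x + lB x) ^ n - lA x ^ n) / x

lemma K0 : IntervalIntegrable (kf 0) volume 0 1 ∧ ∫ x in (0 : ℝ)..1, kf 0 x = 0 := by
  have : kf 0 = fun _ => 0 := by funext x; simp [kf]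
  rw [this]; simp

lemma K1 : IntervalIntegrable (kf 1) volume 0 1 ∧ ∫ x in (0 : ℝ)..1, kf 1 x = Z 2 := by
  have e : kf 1 = fun x => lA x ^ 0 * lB x ^ 1 / x := by funext x; simp only [kf]; ring
  rw [e]
  refine ⟨toII (intAB 0 0), ?_⟩
  simpa using val_AB 0

lemma K2 : IntervalIntegrable (kf 2) volume 0 1 ∧ ∫ x in (0 : ℝ)..1, kf 2 x = 4 * Z 3 := by
  have e : kf 2 = fun x => 2 * (lA x ^ 1 * lB x ^ 1 / x) + lA x ^ 0 * lB x ^ 2 / x := by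
    funext x; simp only [kf]; ring
  have i1 := (toII (intAB 1 0)).const_mul 2
  have i2 := toII (intAB 0 1)
  norm_num only at i1 i2
  rw [e]
  refine ⟨i1.add i2, ?_⟩
  rw [intervalIntegral.integral_add i1 i2, intervalIntegral.integral_const_mul]
  have v1 := val_AB 1
  have v2 := val_B 2 (by norm_num)
  norm_num [Nat.factorial] at v1 v2 ⊢
  rw [v1, v2]; ring

lemma K3 : IntervalIntegrable (kf 3) volume 0 1 ∧ ∫ x in (0 : ℝ)..1, kf 3 x = 27 / 2 * Z 4 := by
  have e : kf 3 = fun x => 3 * (lA x ^ 2 * lB x ^ 1 / x) + 3 * (lA x ^ 1 * lB x ^ 2 / x)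
      + lA x ^ 0 * lB x ^ 3 / x := by
    funext x; simp only [kf]; ring
  have i1 := (toII (intAB 2 0)).const_mul 3
  have i2 := (toII (intAB 1 1)).const_mul 3
  have i3 := toII (intAB 0 2)
  norm_num only at i1 i2 i3
  rw [e]
  refine ⟨(i1.add i2).add i3, ?_⟩
  rw [intervalIntegral.integral_add (i1.add i2) i3, intervalIntegral.integral_add i1 i2,
    intervalIntegral.integral_const_mul, intervalIntegral.integral_const_mul]
  have v1 := val_AB 2
  have v2 := val_ABB 1
  have v3 := val_B 3 (by norm_num)
  have := D13
  norm_num [Nat.factorial] at v1 v2 v3 ⊢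
  rw [v1, v2, v3, this]; ring

lemma K4 : IntervalIntegrable (kf 4) volume 0 1 ∧
    ∫ x in (0 : ℝ)..1, kf 4 x = 144 * Z 5 - 48 * Z 2 * Z 3 := by
  have e : kf 4 = fun x => 4 * (lA x ^ 3 * lB x ^ 1 / x) + 6 * (lA x ^ 2 * lB x ^ 2 / x)
      + 4 * (lA x ^ 1 * lB x ^ 3 / x) + lA x ^ 0 * lB x ^ 4 / x := by
    funext x; simp only [kf]; ring
  have i1 := (toII (intAB 3 0)).const_mul 4
  have i2 := (toII (intAB 2 1)).const_mul 6
  have i3 := (toII (intAB 1 2)).const_mul 4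
  have i4 := toII (intAB 0 3)
  norm_num only at i1 i2 i3 i4
  rw [e]
  refine ⟨((i1.add i2).add i3).add i4, ?_⟩
  rw [intervalIntegral.integral_add ((i1.add i2).add i3) i4,
    intervalIntegral.integral_add (i1.add i2) i3, intervalIntegral.integral_add i1 i2,
    intervalIntegral.integral_const_mul, intervalIntegral.integral_const_mul,
    intervalIntegral.integral_const_mul, val_ABBB]
  have v1 := val_AB 3
  have v2 := val_ABB 2
  have v4 := val_B 4 (by norm_num)
  have := D14
  norm_num [Nat.factorial] at v1 v2 v4 ⊢
  rw [v1, v2, v4, this]; ring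

end EtaAux

namespace EtaAux
open Filter Topology Set

lemma half_sub {x : ℝ} (hx : x ∈ Ioo (1 / 2 : ℝ) 1) : x ∈ Ioo (0 : ℝ) 1 := ⟨by linarith [hx.1], hx.2⟩

lemma lim_UB (n : ℕ) : ∀ j : ℕ,
    Tendsto (fun x => ((lA x + lB x) ^ n - lB x ^ n) * lB x ^ j) (𝓝[<] 1) (𝓝 0) := by
  induction n with
  | zero => intro j; simp
  | succ n ih =>
    intro j
    have h := ((lim_A.mul (ih j)).add (ih (j + 1))).add (lim_AB (n + j))
    norm_num at h
    refine h.congr fun x => ?_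
    ring

lemma lim_UA (k : ℕ) : Tendsto (fun x => (lA x + lB x) ^ k * lA x) (𝓝[<] 1) (𝓝 0) := by
  have h := ((lim_UB k 0).mul lim_A).add (lim_AB k)
  norm_num at h
  refine h.congr fun x => ?_
  ring

lemma lim_x1 : Tendsto (fun x : ℝ => 1 - x) (𝓝[<] 1) (𝓝 0) := by simpa using lim_xB 0

lemma lim_Ux (k : ℕ) : Tendsto (fun x => (lA x + lB x) ^ k * (1 - x)) (𝓝[<] 1) (𝓝 0) := by
  have h := ((lim_UB k 0).mul lim_x1).add (lim_xB k)
  norm_num at h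
  refine h.congr fun x => ?_
  ring

lemma lA_half : lA (1 / 2) = Real.log 2 := by simp [lA]
lemma lB_half : lB (1 / 2) = Real.log 2 := by
  rw [← lA_half, ← lA_flip]; norm_num

lemma half_mem : (1 / 2 : ℝ) ∈ Ioo (0 : ℝ) 1 := by constructor <;> norm_num

lemma intUx (n : ℕ) : IntervalIntegrable (fun x : ℝ => (lA x + lB x) ^ n / x) volume (1 / 2) 1 := by
  rw [intervalIntegrable_iff_integrableOn_Ioo_of_le (by norm_num)]
  have h := ((intU n).mono_set (Ioo_subset_Ioo (by norm_num : (0 : ℝ) ≤ 1 / 2) le_rfl)).const_mul 2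
  refine Integrable.mono' h
    (((measA.add measB).pow_const n).div measurable_id).aestronglyMeasurable ?_
  refine (ae_restrict_iff' measurableSet_Ioo).2 (ae_of_all _ fun x hx => ?_)
  have a := lA_nonneg (half_sub hx)
  have b := lB_nonneg (half_sub hx)
  have x0 := (half_sub hx).1
  rw [Real.norm_of_nonneg (by positivity), div_le_iff₀ x0]
  have : 0 ≤ (lA x + lB x) ^ n := by positivity
  nlinarith [hx.1]

lemma halfK (n : ℕ) (K : ℝ)
    (hK : IntervalIntegrable (kf n) volume 0 1 ∧ ∫ x in (0 : ℝ)..1, kf n x = K) :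
    ∫ x in (1 / 2 : ℝ)..1, (lA x + lB x) ^ n / x
      = (K + (2 * Real.log 2) ^ (n + 1) / (n + 1)) / 2 := by
  obtain ⟨hi, hv⟩ := hK
  have i1 : IntervalIntegrable (kf n) volume 0 (1 / 2) :=
    hi.mono_set (by rw [uIcc_of_le (by norm_num), uIcc_of_le (by norm_num)]; exact Icc_subset_Icc le_rfl (by norm_num))
  have i2 : IntervalIntegrable (kf n) volume (1 / 2) 1 :=
    hi.mono_set (by rw [uIcc_of_le (by norm_num), uIcc_of_le (by norm_num)]; exact Icc_subset_Icc (by norm_num) le_rfl)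
  have i3 : IntervalIntegrable (fun x => kf n (1 - x)) volume (1 / 2) 1 := by
    have := (i1.comp_sub_left 1).symm
    norm_num at this
    norm_num
    exact this
  have v : (∫ x in (1 / 2 : ℝ)..1, kf n x) + ∫ x in (1 / 2 : ℝ)..1, kf n (1 - x) = K := by
    have e := intervalIntegral.integral_comp_sub_left (a := 1 / 2) (b := 1) (kf n) 1
    rw [e, ← hv, ← intervalIntegral.integral_add_adjacent_intervals i1 i2]
    norm_num
    ring
  have hn : (n : ℝ) + 1 ≠ 0 := by positivity
  have h := intervalIntegral.integral_eq_sub_of_hasDerivAt_of_tendsto (a := 1 / 2) (b := 1)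
    (by norm_num)
    (f := fun x => (lB x ^ (n + 1) - lA x ^ (n + 1) - (lA x + lB x) ^ (n + 1)) / ((n : ℝ) + 1))
    (f' := fun x => 2 * ((lA x + lB x) ^ n / x) - (kf n x + kf n (1 - x)))
    (fa := -((2 * Real.log 2) ^ (n + 1) / (n + 1))) (fb := 0)
    (by
      intro x hx
      have hx' := half_sub hx
      have := ((((derivB hx').pow (n + 1)).sub ((derivA hx').pow (n + 1))).sub
        (((derivA hx').add (derivB hx')).pow (n + 1))).div_const ((n : ℝ) + 1)
      convert! this using 1
      have h1 : (1 - x) ≠ 0 := by linarith [hx.2]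
      have h2 : x ≠ 0 := hx'.1.ne'
      simp only [kf, lA_flip, lB_flip, Nat.add_sub_cancel, Pi.add_apply]
      push_cast
      field_simp
      ring)
    (((intUx n).const_mul 2).sub (i2.add i3))
    (by
      have c : ContinuousAt (fun x => (lB x ^ (n + 1) - lA x ^ (n + 1) - (lA x + lB x) ^ (n + 1)) / ((n : ℝ) + 1)) (1 / 2) := by
        have c1 := (derivA half_mem).continuousAt
        have c2 := (derivB half_mem).continuousAt
        exact (((c2.pow _).sub (c1.pow _)).sub ((c1.add c2).pow _)).div_const _
      have := c.tendsto.mono_left (nhdsWithin_le_nhds (s := Ioi (1 / 2)))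
      rw [lA_half, lB_half] at this
      convert! this using 2
      ring)
    (by
      have h := ((lim_UB (n + 1) 0).add (lim_A.pow (n + 1))).neg.div_const ((n : ℝ) + 1)
      norm_num at h
      refine h.congr fun x => ?_
      ring)
  rw [intervalIntegral.integral_sub ((intUx n).const_mul 2) (i2.add i3),
    intervalIntegral.integral_add i2 i3, v, intervalIntegral.integral_const_mul] at h
  linarith

/-- the third integrand in the new variable -/
noncomputable def gf (x : ℝ) : ℝ :=
  ((lA x + lB x) / 2) ^ 3 * (2 - 2 / x + 4 * lA x) * (1 / 2 * (1 / (1 - x) - 1 / x))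

lemma int_gf : IntegrableOn gf (Ioo (1 / 2) 1) := by
  have h := ((intU 3).mono_set (Ioo_subset_Ioo (by norm_num : (0 : ℝ) ≤ 1 / 2) le_rfl)).const_mul 2
  have m : Measurable gf := by
    have := measA
    have := measB
    unfold gf
    measurability
  refine Integrable.mono' h m.aestronglyMeasurable ?_
  refine (ae_restrict_iff' measurableSet_Ioo).2 (ae_of_all _ fun x hx => ?_)
  have a := lA_nonneg (half_sub hx)
  have b := lB_nonneg (half_sub hx)
  have x0 := (half_sub hx).1
  have x1 : 0 < 1 - x := by linarith [hx.2]
  have la := lA_le x0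
  have hF : |2 - 2 / x + 4 * lA x| ≤ 4 * ((1 - x) / x) := by
    have e : 2 - 2 / x = -(2 * ((1 - x) / x)) := by field_simp; ring
    have : 0 < (1 - x) / x := by positivity
    rw [e, abs_le]
    constructor <;> linarith
  have hs : |1 / 2 * (1 / (1 - x) - 1 / x)| = (2 * x - 1) / (2 * x * (1 - x)) := by
    rw [← abs_of_nonneg (a := (2 * x - 1) / (2 * x * (1 - x)))]
    · congr 1
      field_simp
      ring
    · apply div_nonneg <;> [linarith [hx.1]; positivity]
  unfold gf
  rw [norm_mul, norm_mul, Real.norm_of_nonneg (by positivity), Real.norm_eq_abs, Real.norm_eq_abs, hs]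
  have hU : 0 ≤ (lA x + lB x) ^ 3 := by positivity
  have hp : 0 ≤ (2 * x - 1) / (2 * x * (1 - x)) := by
    apply div_nonneg <;> [linarith [hx.1]; positivity]
  calc ((lA x + lB x) / 2) ^ 3 * |2 - 2 / x + 4 * lA x| * ((2 * x - 1) / (2 * x * (1 - x)))
      ≤ ((lA x + lB x) / 2) ^ 3 * (4 * ((1 - x) / x)) * ((2 * x - 1) / (2 * x * (1 - x))) := by gcongr
    _ = (lA x + lB x) ^ 3 * ((2 * x - 1) / (4 * x ^ 2)) := by field_simp; ring
    _ ≤ (lA x + lB x) ^ 3 * 2 := by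
        apply mul_le_mul_of_nonneg_left _ hU
        rw [div_le_iff₀ (by positivity)]
        nlinarith [hx.1, hx.2]
    _ = _ := by ring

lemma val_gf : ∫ x in Ioo (1 / 2 : ℝ) 1, gf x =
    -(Real.log 2 ^ 5 - Real.log 2 ^ 3 + 3 / 2 * Real.log 2 ^ 2 - 3 / 2 * Real.log 2 + 3 / 4)
    + (1 / 32 * (144 * Z 5 - 48 * Z 2 * Z 3 + (2 * Real.log 2) ^ 5 / 5)
      - 1 / 8 * (27 / 2 * Z 4 + (2 * Real.log 2) ^ 4 / 4)
      + 3 / 8 * (4 * Z 3 + (2 * Real.log 2) ^ 3 / 3)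
      - 3 / 4 * (Z 2 + (2 * Real.log 2) ^ 2 / 2)
      + 3 / 4 * (2 * Real.log 2)) := by
  have ig : IntervalIntegrable gf volume (1 / 2) 1 :=
    (intervalIntegrable_iff_integrableOn_Ioo_of_le (by norm_num)).2 int_gf
  have v0 := halfK 0 _ K0
  have v1 := halfK 1 _ K1
  have v2 := halfK 2 _ K2
  have v3 := halfK 3 _ K3
  have v4 := halfK 4 _ K4
  have j0 := (intUx 0).const_mul (3 / 2)
  have j1 := (intUx 1).const_mul (3 / 2)
  have j2 := (intUx 2).const_mul (3 / 4)
  have j3 := (intUx 3).const_mul (1 / 4)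
  have j4 := (intUx 4).const_mul (1 / 16)
  have h := intervalIntegral.integral_eq_sub_of_hasDerivAt_of_tendsto (a := 1 / 2) (b := 1)
    (by norm_num)
    (f := fun x => ((lA x + lB x) / 2) ^ 4 / 4 * (2 - 2 / x + 4 * lA x)
      + 1 / 32 * ((1 / x - 1) * ((lA x + lB x) ^ 4 - 4 * (lA x + lB x) ^ 3
        + 12 * (lA x + lB x) ^ 2 - 24 * (lA x + lB x) + 24)))
    (f' := fun x => gf x - (1 / 16 * ((lA x + lB x) ^ 4 / x) - 1 / 4 * ((lA x + lB x) ^ 3 / x)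
      + 3 / 4 * ((lA x + lB x) ^ 2 / x) - 3 / 2 * ((lA x + lB x) ^ 1 / x)
      + 3 / 2 * ((lA x + lB x) ^ 0 / x)))
    (fa := Real.log 2 ^ 5 - Real.log 2 ^ 3 + 3 / 2 * Real.log 2 ^ 2 - 3 / 2 * Real.log 2 + 3 / 4)
    (fb := 0)
    (by
      intro x hx
      have hx' := half_sub hx
      have h1 : (1 - x) ≠ 0 := by linarith [hx.2]
      have h2 : x ≠ 0 := hx'.1.ne'
      have dA := derivA hx'
      have dU := dA.add (derivB hx')
      have dI : HasDerivAt (fun x : ℝ => 1 / x) (-(1 / x ^ 2)) x := by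
        simpa using hasDerivAt_inv h2
      have dI2 : HasDerivAt (fun x : ℝ => 2 / x) (2 * -(1 / x ^ 2)) x := by
        simpa [div_eq_mul_inv] using dI.const_mul 2
      have := ((((dU.div_const 2).pow 4).div_const 4).mul ((dI2.const_sub 2).add (dA.const_mul 4))).add
        (((dI.sub_const 1).mul (((((dU.pow 4).sub ((dU.pow 3).const_mul 4)).add
          ((dU.pow 2).const_mul 12)).sub (dU.const_mul 24)).add_const 24)).const_mul (1 / 32))
      convert! this using 1
      simp only [gf, Pi.add_apply, Pi.pow_apply, Pi.sub_apply]
      push_cast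
      field_simp
      ring)
    (ig.sub ((((j4.sub j3).add j2).sub j1).add j0))
    (by
      have c : ContinuousAt (fun x => ((lA x + lB x) / 2) ^ 4 / 4 * (2 - 2 / x + 4 * lA x)
          + 1 / 32 * ((1 / x - 1) * ((lA x + lB x) ^ 4 - 4 * (lA x + lB x) ^ 3
        + 12 * (lA x + lB x) ^ 2 - 24 * (lA x + lB x) + 24))) (1 / 2) := by
        have c1 := (derivA half_mem).continuousAt
        have c2 := (derivB half_mem).continuousAt
        have : (1 / 2 : ℝ) ≠ 0 := by norm_num
        fun_prop (disch := norm_num)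
      have := c.tendsto.mono_left (nhdsWithin_le_nhds (s := Ioi (1 / 2)))
      rw [lA_half, lB_half] at this
      convert! this using 2
      ring)
    (by
      have li : Tendsto (fun x : ℝ => 1 / x) (𝓝[<] 1) (𝓝 1) := by
        have : ContinuousAt (fun x : ℝ => 1 / x) 1 := by fun_prop (disch := norm_num)
        simpa using this.tendsto.mono_left (nhdsWithin_le_nhds (s := Iio 1))
      have h := ((((((lim_Ux 4).const_mul (-(1 / 32))).add ((lim_Ux 4).const_mul (1 / 32))).sub
        ((lim_Ux 3).const_mul (1 / 8))).add ((lim_Ux 2).const_mul (3 / 8))).sub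
        ((lim_Ux 1).const_mul (3 / 4))).add ((lim_Ux 0).const_mul (3 / 4))
      have h' := (h.mul li).add ((lim_UA 4).const_mul (1 / 16))
      norm_num only at h'
      refine h'.congr' ?_
      filter_upwards [Ioo_mem_nhdsLT (by norm_num : (1 / 2 : ℝ) < 1)] with x hx
      have h2 : x ≠ 0 := (half_sub hx).1.ne'
      field_simp
      ring)
  rw [intervalIntegral.integral_sub ig ((((j4.sub j3).add j2).sub j1).add j0),
    intervalIntegral.integral_add (((j4.sub j3).add j2).sub j1) j0,
    intervalIntegral.integral_sub ((j4.sub j3).add j2) j1,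
    intervalIntegral.integral_add (j4.sub j3) j2,
    intervalIntegral.integral_sub j4 j3,
    intervalIntegral.integral_const_mul, intervalIntegral.integral_const_mul,
    intervalIntegral.integral_const_mul, intervalIntegral.integral_const_mul,
    intervalIntegral.integral_const_mul, v0, v1, v2, v3, v4,
    intervalIntegral.integral_of_le (by norm_num), integral_Ioc_eq_integral_Ioo] at h
  push_cast at h
  linarith

end EtaAux

namespace EtaAux
open Filter Topology Set

lemma U_exp {x : ℝ} (hx : x ∈ Ioo (0 : ℝ) 1) :
    Real.exp (-2 * ((lA x + lB x) / 2)) = x * (1 - x) := by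
  have h1 : 0 < 1 - x := by linarith [hx.2]
  rw [show -2 * ((lA x + lB x) / 2) = Real.log x + Real.log (1 - x) by simp only [lA, lB]; ring,
    Real.exp_add, Real.exp_log hx.1, Real.exp_log h1]

lemma U_sqrt {x : ℝ} (hx : x ∈ Ioo (1 / 2 : ℝ) 1) :
    √(1 / 4 - Real.exp (-2 * ((lA x + lB x) / 2))) = x - 1 / 2 := by
  rw [U_exp (half_sub hx), show 1 / 4 - x * (1 - x) = (x - 1 / 2) ^ 2 by ring]
  exact Real.sqrt_sq (by linarith [hx.1])

lemma exp_log2 : Real.exp (-2 * Real.log 2) = 1 / 4 := by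
  rw [show -2 * Real.log 2 = -(Real.log 2 + Real.log 2) by ring, Real.exp_neg, Real.exp_add,
    Real.exp_log (by norm_num)]
  norm_num

lemma U_gt {x : ℝ} (hx : x ∈ Ioo (1 / 2 : ℝ) 1) : Real.log 2 < (lA x + lB x) / 2 := by
  have h : Real.exp (-2 * ((lA x + lB x) / 2)) < Real.exp (-2 * Real.log 2) := by
    rw [U_exp (half_sub hx), exp_log2]
    nlinarith [hx.1]
  have := Real.exp_lt_exp.1 h
  linarith

lemma image_U : (fun x => (lA x + lB x) / 2) '' Ioo (1 / 2) 1 = Ioi (Real.log 2) := by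
  ext s
  constructor
  · rintro ⟨x, hx, rfl⟩
    exact U_gt hx
  · intro hs
    have hs' : Real.log 2 < s := hs
    have h : Real.exp (-2 * s) < 1 / 4 := by
      rw [← exp_log2]; exact Real.exp_lt_exp.2 (by linarith)
    have hp := Real.exp_pos (-2 * s)
    have q0 : 0 < √(1 / 4 - Real.exp (-2 * s)) := Real.sqrt_pos.2 (by linarith)
    have q1 : √(1 / 4 - Real.exp (-2 * s)) < 1 / 2 := by
      rw [Real.sqrt_lt' (by norm_num)]
      linarith
    have hx : 1 / 2 + √(1 / 4 - Real.exp (-2 * s)) ∈ Ioo (1 / 2 : ℝ) 1 :=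
      ⟨by linarith, by linarith⟩
    refine ⟨_, hx, ?_⟩
    have e := U_exp (half_sub hx)
    have sq := Real.sq_sqrt (by linarith : 0 ≤ 1 / 4 - Real.exp (-2 * s))
    have e2 : Real.exp (-2 * ((lA (1 / 2 + √(1 / 4 - Real.exp (-2 * s)))
        + lB (1 / 2 + √(1 / 4 - Real.exp (-2 * s)))) / 2)) = Real.exp (-2 * s) := by
      rw [e]; nlinarith [sq]
    have := Real.exp_injective e2
    simp only
    linarith

lemma inj_U : InjOn (fun x => (lA x + lB x) / 2) (Ioo (1 / 2) 1) := by
  intro x hx y hy h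
  have h1 := U_sqrt hx
  have h2 := U_sqrt hy
  simp only at h
  rw [h] at h1
  linarith

lemma deriv_U {x : ℝ} (hx : x ∈ Ioo (1 / 2 : ℝ) 1) :
    HasDerivWithinAt (fun x => (lA x + lB x) / 2) (1 / 2 * (1 / (1 - x) - 1 / x)) (Ioo (1 / 2) 1) x := by
  have := ((derivA (half_sub hx)).add (derivB (half_sub hx))).div_const 2
  refine HasDerivAt.hasDerivWithinAt ?_
  convert! this using 1
  ring

lemma integrand_U {x : ℝ} (hx : x ∈ Ioo (1 / 2 : ℝ) 1) :
    |1 / 2 * (1 / (1 - x) - 1 / x)| • (((lA x + lB x) / 2) ^ 3 * etaLog ((lA x + lB x) / 2))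
      = 6 / Real.pi ^ 2 * gf x := by
  have hU := U_gt hx
  have hl : 0 < Real.log 2 := Real.log_pos (by norm_num)
  have x0 := (half_sub hx).1
  have x1 : 0 < 1 - x := by linarith [hx.2]
  have pos : 0 ≤ 1 / 2 * (1 / (1 - x) - 1 / x) := by
    have : 1 / x ≤ 1 / (1 - x) := one_div_le_one_div_of_le x1 (by linarith [hx.1])
    linarith
  have e2 : Real.exp (2 * ((lA x + lB x) / 2)) = 1 / (x * (1 - x)) := by
    rw [← U_exp (half_sub hx), one_div, ← Real.exp_neg]; congr 1; ring
  rw [abs_of_nonneg pos, etaLog, if_neg (by linarith), if_neg (by linarith), U_sqrt hx, e2, gf,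
    smul_eq_mul, show 1 / 2 + (x - 1 / 2) = x by ring, show Real.log x = - lA x by simp [lA]]
  field_simp
  ring

lemma piece3 : IntegrableOn (fun s => s ^ 3 * etaLog s) (Ioi (Real.log 2)) ∧
    ∫ s in Ioi (Real.log 2), s ^ 3 * etaLog s = 6 / Real.pi ^ 2 * ∫ x in Ioo (1 / 2 : ℝ) 1, gf x := by
  rw [← image_U]
  constructor
  · rw [integrableOn_image_iff_integrableOn_abs_deriv_smul measurableSet_Ioo
      (fun x hx => deriv_U hx) inj_U]
    refine (integrableOn_congr_fun (fun x hx => ?_) measurableSet_Ioo).2 (int_gf.const_mul (6 / Real.pi ^ 2))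
    exact integrand_U hx
  · rw [integral_image_eq_integral_abs_deriv_smul measurableSet_Ioo
      (fun x hx => deriv_U hx) inj_U, ← integral_const_mul]
    exact setIntegral_congr_fun measurableSet_Ioo (fun x hx => integrand_U hx)

lemma piece1 : IntegrableOn (fun s => s ^ 3 * etaLog s) (Iic 0) ∧
    ∫ s in Iic (0 : ℝ), s ^ 3 * etaLog s = 6 / Real.pi ^ 2 * (-(3 / 8)) := by
  have e : ∫ s in Iic (0 : ℝ), s ^ 3 * etaLog s = 6 / Real.pi ^ 2 * (-(3 / 8)) := by
    have h := Real.integral_rpow_mul_exp_neg_mul_Ioi (a := (3 : ℕ) + 1) (r := 2)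
        (by positivity) (by positivity)
    rw [Real.Gamma_nat_eq_factorial] at h
    have h1 := integral_comp_neg_Ioi (E := ℝ) 0 (fun s => s ^ 3 * etaLog s)
    rw [neg_zero] at h1
    rw [← h1]
    have h2 : ∫ t in Ioi (0 : ℝ), (-t) ^ 3 * etaLog (-t) =
        ∫ t in Ioi (0 : ℝ), -(6 / Real.pi ^ 2) * (t ^ (((3 : ℕ) + 1 : ℝ) - 1) * Real.exp (-(2 * t))) := by
      apply setIntegral_congr_fun measurableSet_Ioi
      intro t ht
      have ht' : 0 < t := ht
      simp only [etaLog]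
      rw [if_pos (by linarith), add_sub_cancel_right, Real.rpow_natCast,
        show 2 * -t = -(2 * t) by ring]
      ring
    rw [h2, integral_const_mul, h]
    have h3 : (1 / 2 : ℝ) ^ (((3 : ℕ) : ℝ) + 1) = 1 / 16 := by
      rw [show (((3 : ℕ) : ℝ) + 1) = ((4 : ℕ) : ℝ) by norm_num, Real.rpow_natCast]; norm_num
    rw [h3]
    norm_num [Nat.factorial]
  refine ⟨?_, e⟩
  apply Integrable.of_integral_ne_zero
  rw [e]
  have := Real.pi_pos
  apply mul_ne_zero
  · positivity
  · norm_num

lemma piece2 : IntegrableOn (fun s => s ^ 3 * etaLog s) (Ioc 0 (Real.log 2)) ∧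
    ∫ s in Ioc 0 (Real.log 2), s ^ 3 * etaLog s = 6 / Real.pi ^ 2 *
      ((-4 * (Real.log 2 ^ 3 / 2 - 3 / 4 * Real.log 2 ^ 2 + 3 / 4 * Real.log 2 - 3 / 8)
        + Real.log 2 ^ 4 / 2 + 4 / 5 * Real.log 2 ^ 5) - 3 / 8) := by
  have hl : 0 < Real.log 2 := Real.log_pos (by norm_num)
  have c : Continuous (fun s : ℝ => 6 / Real.pi ^ 2 * (s ^ 3 * (-Real.exp (2 * s) + 2 + 4 * s))) := by
    fun_prop
  have eq : ∀ s ∈ Ioc 0 (Real.log 2), s ^ 3 * etaLog s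
      = 6 / Real.pi ^ 2 * (s ^ 3 * (-Real.exp (2 * s) + 2 + 4 * s)) := by
    intro s hs
    rw [etaLog, if_neg (by linarith [hs.1]), if_pos hs.2]
    ring
  constructor
  · refine (integrableOn_congr_fun (fun x hx => eq x hx) measurableSet_Ioc).2 ?_
    exact (c.integrableOn_Icc).mono_set Ioc_subset_Icc_self
  · rw [setIntegral_congr_fun measurableSet_Ioc eq, integral_const_mul,
      ← intervalIntegral.integral_of_le hl.le]
    congr 1
    rw [intervalIntegral.integral_eq_sub_of_hasDerivAt
      (f := fun s => -Real.exp (2 * s) * (s ^ 3 / 2 - 3 / 4 * s ^ 2 + 3 / 4 * s - 3 / 8)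
        + s ^ 4 / 2 + 4 / 5 * s ^ 5)]
    · have : Real.exp (2 * Real.log 2) = 4 := by
        rw [two_mul, Real.exp_add, Real.exp_log (by norm_num)]; norm_num
      rw [this]
      norm_num
    · intro s _
      have d0 := hasDerivAt_id s
      have dE : HasDerivAt (fun s : ℝ => Real.exp (2 * s)) (Real.exp (2 * s) * (2 * 1)) s :=
        (d0.const_mul 2).exp
      have dp : ∀ n : ℕ, HasDerivAt (fun s : ℝ => s ^ n) ((n : ℝ) * s ^ (n - 1)) s :=
        fun n => hasDerivAt_pow n s
      have := ((dE.neg.mul (((((dp 3).div_const 2).sub ((dp 2).const_mul (3 / 4))).add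
        (d0.const_mul (3 / 4))).sub_const (3 / 8))).add ((dp 4).div_const 2)).add
        ((dp 5).const_mul (4 / 5))
      convert! this using 1
      simp
      ring
    · apply Continuous.intervalIntegrable
      fun_prop

end EtaAux

theorem etaLog_third_moment :
    (∫ s : ℝ, s ^ 3 * etaLog s) =
      (9 / Real.pi ^ 2 - 3 / 2) * (riemannZeta 3).re + 27 / Real.pi ^ 2 * (riemannZeta 5).re
        - 3 / 4 - 9 * Real.pi ^ 2 / 80 := by
  have hl : 0 < Real.log 2 := Real.log_pos (by norm_num)
  obtain ⟨i1, v1⟩ := EtaAux.piece1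
  obtain ⟨i2, v2⟩ := EtaAux.piece2
  obtain ⟨i3, v3⟩ := EtaAux.piece3
  have i23 : IntegrableOn (fun s => s ^ 3 * etaLog s) (Set.Ioi 0) := by
    rw [← Set.Ioc_union_Ioi_eq_Ioi hl.le]
    exact i2.union i3
  have h1 := intervalIntegral.integral_Iic_add_Ioi i1 i23
  have h2 : ∫ s in Set.Ioi 0, s ^ 3 * etaLog s = (∫ s in Set.Ioc 0 (Real.log 2), s ^ 3 * etaLog s)
      + ∫ s in Set.Ioi (Real.log 2), s ^ 3 * etaLog s := by
    rw [← Set.Ioc_union_Ioi_eq_Ioi hl.le]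
    exact setIntegral_union Set.Ioc_disjoint_Ioi_same measurableSet_Ioi i2 i3
  have z3 := EtaAux.zeta_re (by omega : 2 ≤ 3)
  have z5 := EtaAux.zeta_re (by omega : 2 ≤ 5)
  push_cast at z3 z5
  rw [← h1, h2, v1, v2, v3, EtaAux.val_gf, z3, z5, EtaAux.Z2, EtaAux.Z4]
  have := Real.pi_pos.ne'
  field_simp
  ring
end

section
/- The upper tail of η_log satisfies lim_{s→∞} e^{2s}·η_log(s) = 12/π²; that is, η_log(s) ∼ (12/π²)·e^{−2s} as s → ∞. -/
open Filter

theorem etaLog_upper_tail :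
    Tendsto (fun s : ℝ => Real.exp (2 * s) * etaLog s) atTop
      (nhds (12 / Real.pi ^ 2)) := by
  have hx : Tendsto (fun s : ℝ => Real.exp (-2 * s)) atTop (nhds 0) := by
    apply Real.tendsto_exp_atBot.comp
    exact tendsto_id.const_mul_atTop_of_neg (by norm_num)
  have hw : Tendsto (fun s : ℝ => 1 / 2 + Real.sqrt (1 / 4 - Real.exp (-2 * s))) atTop
      (nhds 1) := by
    have h1 : Real.sqrt (1 / 4 - 0) = 1 / 2 := by
      rw [Real.sqrt_eq_iff_mul_self_eq_of_pos] <;> norm_num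
    have h2 := ((hx.const_sub (1 / 4)).sqrt).const_add (1 / 2)
    rw [h1] at h2
    norm_num at h2 ⊢
    exact h2
  have key : ∀ s : ℝ, Real.log 2 < s →
      Real.exp (-2 * s) = (1 / 2 + Real.sqrt (1 / 4 - Real.exp (-2 * s))) *
        (1 - (1 / 2 + Real.sqrt (1 / 4 - Real.exp (-2 * s)))) := by
    intro s hs
    have h4 : Real.exp (-2 * s) ≤ 1 / 4 := by
      have : Real.exp (-2 * Real.log 2) = 1 / 4 := by
        rw [show -2 * Real.log 2 = -(Real.log 2 + Real.log 2) by ring, Real.exp_neg,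
          Real.exp_add, Real.exp_log (by norm_num)]
        norm_num
      rw [← this]
      apply Real.exp_le_exp.2
      linarith
    have := Real.mul_self_sqrt (sub_nonneg.2 h4)
    nlinarith
  have hw' : Tendsto (fun s : ℝ => 1 / 2 + Real.sqrt (1 / 4 - Real.exp (-2 * s))) atTop
      (nhdsWithin 1 {1}ᶜ) := by
    refine tendsto_nhdsWithin_iff.2 ⟨hw, ?_⟩
    filter_upwards [eventually_gt_atTop (Real.log 2)] with s hs h
    have h1 := key s hs
    have h2 := Real.exp_pos (-2 * s)
    rw [Set.mem_singleton_iff] at h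
    rw [h] at h1
    linarith
  have hl := (hasDerivAt_iff_tendsto_slope.1 (Real.hasDerivAt_log one_ne_zero)).comp hw'
  have hlim := (((hw.pow 2).inv₀ (by norm_num)).const_mul (-2)).add
    ((hl.mul (hw.inv₀ one_ne_zero)).const_mul 4)
  have hlim2 := hlim.const_mul (6 / Real.pi ^ 2)
  have e : 6 / Real.pi ^ 2 * (-2 * ((1 : ℝ) ^ 2)⁻¹ + 4 * ((1 : ℝ)⁻¹ * (1 : ℝ)⁻¹))
      = 12 / Real.pi ^ 2 := by ring
  rw [e] at hlim2
  refine hlim2.congr' ?_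
  filter_upwards [eventually_gt_atTop (Real.log 2)] with s hs
  have h0 : 0 < Real.log 2 := Real.log_pos (by norm_num)
  have h1 := key s hs
  have h2 := Real.exp_pos (-2 * s)
  have h3 : Real.exp (2 * s) = (Real.exp (-2 * s))⁻¹ := by
    rw [← Real.exp_neg]; congr 1; ring
  rw [etaLog, if_neg (by linarith), if_neg (by linarith), h3]
  simp only [Function.comp, slope_def_field, Real.log_one, sub_zero]
  have hr := Real.sqrt_nonneg (1 / 4 - Real.exp (-2 * s))
  generalize Real.sqrt (1 / 4 - Real.exp (-2 * s)) = r at *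
  obtain ⟨w, rfl⟩ : ∃ w, r = w - 1 / 2 := ⟨r + 1 / 2, by ring⟩
  have hww : 1 / 2 + (w - 1 / 2) = w := by ring
  rw [hww] at h1 ⊢
  rw [h1] at h2 ⊢
  have hw0 : w ≠ 0 := by rintro rfl; simp at h2
  have hw1 : 1 - w ≠ 0 := by intro h; rw [h] at h2; simp at h2
  have hw2 : w - 1 ≠ 0 := by intro h; apply hw1; linarith
  generalize Real.log w = L
  rw [show w - 1 = -(1 - w) by ring]
  field_simp
  ring
end

section
/- The density η_log attains its unique global maximum at s = (1/2)·log 2: for every real s ≠ (1/2)·log 2 one has η_log(s) < η_log((1/2)·log 2), and η_log((1/2)·log 2) = (12/π²)·log 2. -/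
theorem etaLog_mode :
    (∀ s : ℝ, s ≠ (1 / 2) * Real.log 2 → etaLog s < etaLog ((1 / 2) * Real.log 2)) ∧
      etaLog ((1 / 2) * Real.log 2) = 12 / Real.pi ^ 2 * Real.log 2 := by
  have l1 := Real.log_two_gt_d9
  have l2 := Real.log_two_lt_d9
  have hv : etaLog ((1 / 2) * Real.log 2) = 12 / Real.pi ^ 2 * Real.log 2 := by
    have e : Real.exp (2 * (1 / 2 * Real.log 2)) = 2 := by
      rw [show 2 * (1 / 2 * Real.log 2) = Real.log 2 by ring, Real.exp_log (by norm_num)]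
    unfold etaLog
    rw [if_neg (by linarith), if_pos (by linarith), e]
    ring
  refine ⟨fun s hs => ?_, hv⟩
  rw [hv, show 12 / Real.pi ^ 2 * Real.log 2 = 6 / Real.pi ^ 2 * (2 * Real.log 2) by ring]
  have hpi : 0 < 6 / Real.pi ^ 2 := by positivity
  unfold etaLog
  split_ifs with h0 h1
  · refine mul_lt_mul_of_pos_left ?_ hpi
    have : Real.exp (2 * s) ≤ 1 := Real.exp_le_one_iff.mpr (by linarith)
    linarith
  · refine mul_lt_mul_of_pos_left ?_ hpi
    have h := Real.add_one_lt_exp (x := 2 * s - Real.log 2) (fun h => hs (by linarith))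
    rw [Real.exp_sub, Real.exp_log (by norm_num)] at h
    linarith
  · refine mul_lt_mul_of_pos_left ?_ hpi
    push Not at h0 h1
    have hu : 4 < Real.exp (2 * s) := by
      have : Real.exp (2 * Real.log 2) = 4 := by
        rw [two_mul, Real.exp_add, Real.exp_log (by norm_num)]; norm_num
      rw [← this]
      exact Real.exp_lt_exp.mpr (by linarith)
    have hinv : Real.exp (-2 * s) = (Real.exp (2 * s))⁻¹ := by
      rw [← Real.exp_neg]; congr 1; ring
    rw [hinv]
    set u := Real.exp (2 * s) with hudef
    have hu0 : 0 < u := by linarith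
    have hle : u⁻¹ ≤ 1 / 4 := by
      rw [inv_eq_one_div]; exact one_div_le_one_div_of_le (by norm_num) hu.le
    set q := Real.sqrt (1 / 4 - u⁻¹) with hq
    have q0 : 0 ≤ q := Real.sqrt_nonneg _
    have q2 : q * q = 1 / 4 - u⁻¹ := Real.mul_self_sqrt (by linarith)
    have ht : 0 < 1 / 2 + q := by linarith
    have key : u * (1 - 2 * q) = 2 * (1 / 2 + q)⁻¹ := by
      have : u * (1 / 4 - q * q) = 1 := by
        rw [q2]; field_simp; ring
      rw [← div_eq_mul_inv, eq_div_iff ht.ne']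
      linear_combination 2 * this
    have h := Real.log_le_sub_one_of_pos (x := (1 / 2 + q)⁻¹ / 2) (by positivity)
    rw [Real.log_div (by positivity) (by norm_num), Real.log_inv] at h
    nlinarith [h, key]
end

section
/- For every integer n ≥ 0, the Laurent coefficient b_n of the beta function B(z,1/2) at z = 0 is given by the convergent series b_n = (−1)^n·Σ_{j=1}^∞ C(2j−1, j)·2^{−(2j−1)}·j^{−(n+1)}, where C(2j−1, j) is the binomial coefficient. -/
/-- Euler beta function B(z, 1/2). -/
noncomputable def betaHalf (z : ℝ) : ℝ :=
  Real.Gamma z * Real.Gamma (1 / 2) / Real.Gamma (z + 1 / 2)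

/-- B(z,1/2) minus its pole 1/z, extended by its limit 2 log 2 at z = 0. -/
noncomputable def f (z : ℝ) : ℝ :=
  if z = 0 then 2 * Real.log 2 else betaHalf z - 1 / z

/-- The Laurent coefficients of B(z,1/2) at z = 0 (for nonnegative indices). -/
noncomputable def b (n : ℕ) : ℝ := (1 / (n.factorial : ℝ)) * iteratedDeriv n f 0

open Filter Topology

/-- central binomial coefficient normalised -/
noncomputable def cc (n : ℕ) : ℝ := (n.centralBinom : ℝ) / 4 ^ n

lemma cc_pos (n : ℕ) : 0 < cc n := by
  unfold cc
  have := Nat.centralBinom_pos n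
  positivity

lemma cc_zero : cc 0 = 1 := by simp [cc]

lemma cc_succ (n : ℕ) : cc (n + 1) = cc n * (2 * n + 1) / (2 * n + 2) := by
  unfold cc
  have h : ((n : ℝ) + 1) * (n + 1).centralBinom = 2 * (2 * n + 1) * n.centralBinom := by
    exact_mod_cast Nat.succ_mul_centralBinom_succ n
  have h1 : (n : ℝ) + 1 ≠ 0 := by positivity
  have h2 : ((n + 1).centralBinom : ℝ) = 2 * (2 * n + 1) * n.centralBinom / (n + 1) := by
    field_simp
    linarith
  rw [h2, pow_succ]
  field_simp
  ring

lemma cc_succ_le (n : ℕ) : cc (n + 1) ≤ cc n := by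
  rw [cc_succ, div_le_iff₀ (by positivity)]
  have := cc_pos n
  nlinarith

lemma cc_eq (j : ℕ) : ((2 * (j + 1) - 1).choose (j + 1) : ℝ) / 2 ^ (2 * (j + 1) - 1)
    = cc (j + 1) := by
  have h : (j + 1).centralBinom = 2 * (2 * (j + 1) - 1).choose (j + 1) := by
    rw [Nat.centralBinom_eq_two_mul_choose]
    have e : 2 * (j + 1) - 1 = 2 * j + 1 := by omega
    have e' : 2 * (j + 1) = (2 * j + 1) + 1 := by omega
    have e2 : (2 * j + 1).choose j = (2 * j + 1).choose (j + 1) :=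
      Nat.choose_symm_of_eq_add (by omega)
    rw [e, e', Nat.choose_succ_succ, e2]
    simp only [Nat.succ_eq_add_one]
    ring
  unfold cc
  rw [h]
  have e : (4 : ℝ) ^ (j + 1) = 2 * 2 ^ (2 * (j + 1) - 1) := by
    have e' : 2 * (j + 1) - 1 + 1 = 2 * (j + 1) := by omega
    rw [← pow_succ', e', pow_mul]
    norm_num
  rw [e]
  push_cast
  field_simp

lemma cc_summable : Summable (fun j : ℕ => cc (j + 1) / ((j : ℝ) + 1)) := by
  have h : Summable (fun j : ℕ => cc j / ((j : ℝ) + 1)) := by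
    apply summable_of_sum_range_le (c := 2)
    · intro n
      have := cc_pos n
      positivity
    · intro n
      have : ∑ i ∈ Finset.range n, cc i / ((i : ℝ) + 1) = 2 - 2 * cc n := by
        induction n with
        | zero => simp [cc_zero]
        | succ n ih =>
          rw [Finset.sum_range_succ, ih, cc_succ]
          field_simp
          ring
      rw [this]
      linarith [cc_pos n]
  refine h.of_nonneg_of_le (fun n => ?_) (fun n => ?_)
  · have := cc_pos (n + 1)
    positivity
  · have := cc_succ_le n
    gcongr

lemma choose_half (n : ℕ) : Ring.choose ((1 / 2 : ℝ) + n - 1) n = cc n := by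
  rw [← Ring.multichoose_eq]
  have h : ∀ n : ℕ, (n.factorial : ℝ) * Ring.multichoose (1 / 2 : ℝ) n
      = (ascPochhammer ℝ n).eval (1 / 2) := by
    intro n
    have := Ring.factorial_nsmul_multichoose_eq_ascPochhammer (1 / 2 : ℝ) n
    rw [nsmul_eq_mul] at this
    rw [this, Polynomial.ascPochhammer_smeval_eq_eval]
  have h2 : ∀ n : ℕ, (n.factorial : ℝ) * cc n = (ascPochhammer ℝ n).eval (1 / 2) := by
    intro n
    induction n with
    | zero => simp [cc_zero]
    | succ n ih =>
      rw [ascPochhammer_succ_eval, ← ih, cc_succ, Nat.factorial_succ]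
      push_cast
      field_simp
      ring
  have := (h n).trans (h2 n).symm
  exact mul_left_cancel₀ (by positivity) this

lemma gen_cc {x : ℝ} (hx : |x| < 1) :
    HasSum (fun n => cc n * x ^ n) (1 / (1 - x) ^ (1 / 2 : ℝ)) := by
  have h := (Real.one_div_one_sub_rpow_hasFPowerSeriesOnBall_zero (1 / 2)).hasSum (y := x)
    (by simpa [enorm_eq_nnnorm] using! hx)
  simp only [FormalMultilinearSeries.ofScalars_apply_eq, choose_half, smul_eq_mul, zero_add] at h
  exact h

lemma betaSeries {u : ℂ} (hu : 0 < u.re) :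
    HasSum (fun j : ℕ => (cc j : ℂ) / (u + j)) (Complex.betaIntegral u (1 / 2)) := by
  have hre : ∀ j : ℕ, -1 < (u - 1 + j).re := by
    intro j
    have : (0 : ℝ) ≤ j := by positivity
    simp
    linarith
  have hI : ∀ j : ℕ, ∫ x : ℝ in (0 : ℝ)..1, (cc j : ℂ) * (x : ℂ) ^ (u - 1 + j)
      = (cc j : ℂ) / (u + j) := by
    intro j
    have e : u - 1 + j + 1 = u + j := by ring
    have hne : u + j ≠ 0 := by
      intro h
      have := hre j
      rw [← e] at h
      have h' := congrArg Complex.re h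
      simp at h' this
      linarith
    rw [intervalIntegral.integral_const_mul, integral_cpow (Or.inl (hre j)), e]
    rw [Complex.ofReal_one, Complex.one_cpow, Complex.ofReal_zero, Complex.zero_cpow hne]
    ring
  have hN : ∀ j : ℕ, ∫ x : ℝ in (0 : ℝ)..1, ‖(cc j : ℂ) * (x : ℂ) ^ (u - 1 + j)‖
      = cc j / (u.re + j) := by
    intro j
    have : ∀ x ∈ Set.uIoc (0 : ℝ) 1, ‖(cc j : ℂ) * (x : ℂ) ^ (u - 1 + j)‖
        = cc j * x ^ (u.re - 1 + j) := by
      intro x hx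
      rw [Set.uIoc_of_le zero_le_one] at hx
      rw [norm_mul, Complex.norm_cpow_eq_rpow_re_of_pos hx.1, Complex.norm_real,
        Real.norm_of_nonneg (cc_pos j).le]
      simp
    rw [intervalIntegral.integral_congr_ae (Filter.Eventually.of_forall this), intervalIntegral.integral_const_mul,
      integral_rpow (Or.inl (by simpa using hre j))]
    have e : u.re - 1 + j + 1 = u.re + j := by ring
    have : 0 < u.re + j := by positivity
    rw [e, Real.one_rpow, Real.zero_rpow this.ne']
    ring
  have hS : Summable (fun j : ℕ => cc j / (u.re + j)) := by
    rw [← summable_nat_add_iff 1]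
    refine (cc_summable.of_nonneg_of_le (fun n => ?_) (fun n => ?_))
    · have := cc_pos (n + 1)
      positivity
    · have := (cc_pos (n + 1)).le
      push_cast
      exact div_le_div_of_nonneg_left this (by positivity) (by linarith)
  have key := MeasureTheory.hasSum_integral_of_summable_integral_norm
    (μ := MeasureTheory.volume.restrict (Set.Ioc (0 : ℝ) 1))
    (F := fun (j : ℕ) (x : ℝ) => (cc j : ℂ) * (x : ℂ) ^ (u - 1 + j)) ?_ ?_
  · have e1 : (fun j : ℕ => (cc j : ℂ) / (u + j)) = fun j : ℕ =>
        ∫ x : ℝ in Set.Ioc (0 : ℝ) 1, (cc j : ℂ) * (x : ℂ) ^ (u - 1 + j) := by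
      ext j
      rw [← hI j, intervalIntegral.integral_of_le zero_le_one]
    rw [e1]
    refine (congrArg (HasSum _) ?_).mpr key
    unfold Complex.betaIntegral
    rw [intervalIntegral.integral_of_le zero_le_one, MeasureTheory.integral_Ioc_eq_integral_Ioo,
      MeasureTheory.integral_Ioc_eq_integral_Ioo]
    refine MeasureTheory.setIntegral_congr_fun measurableSet_Ioo (fun x hx => ?_)
    have hx0 : (x : ℂ) ≠ 0 := by exact_mod_cast hx.1.ne'
    have hs : HasSum (fun n => ((cc n * x ^ n : ℝ) : ℂ)) ((1 / (1 - x) ^ (1 / 2 : ℝ) : ℝ) : ℂ) :=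
      Complex.hasSum_ofReal.mpr (gen_cc (by rw [abs_of_pos hx.1]; exact hx.2))
    have hs2 := hs.mul_left ((x : ℂ) ^ (u - 1))
    have e2 : (1 - (x : ℂ)) ^ ((1 / 2 : ℂ) - 1) = ((1 / (1 - x) ^ (1 / 2 : ℝ) : ℝ) : ℂ) := by
      have h0 : (0 : ℝ) ≤ 1 - x := by linarith [hx.2]
      rw [one_div ((1 - x) ^ (1 / 2 : ℝ)), ← Real.rpow_neg h0, Complex.ofReal_cpow h0]
      push_cast
      norm_num
    simp only [e2]
    rw [← hs2.tsum_eq]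
    refine tsum_congr (fun n => ?_)
    rw [Complex.cpow_add _ _ hx0, Complex.cpow_natCast]
    push_cast
    ring
  · intro j
    have := (intervalIntegral.intervalIntegrable_cpow' (a := 0) (b := 1) (hre j)).const_mul (cc j : ℂ)
    rwa [intervalIntegrable_iff_integrableOn_Ioc_of_le zero_le_one] at this
  · simp_rw [← intervalIntegral.integral_of_le zero_le_one, hN]
    exact hS

lemma re_bound {z : ℂ} (hz : -(1 / 2 : ℝ) < z.re) (j : ℕ) :
    ((j : ℝ) + 1) / 2 ≤ (z + ((j : ℂ) + 1)).re := by
  have : (0 : ℝ) ≤ j := by positivity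
  simp
  linarith

lemma term_bound {z : ℂ} (hz : -(1 / 2 : ℝ) < z.re) (j : ℕ) :
    ‖(cc (j + 1) : ℂ) / (z + ((j : ℂ) + 1))‖ ≤ 2 * (cc (j + 1) / ((j : ℝ) + 1)) := by
  have h1 := (re_bound hz j).trans (Complex.re_le_norm _)
  have hc := cc_pos (j + 1)
  rw [norm_div, Complex.norm_real, Real.norm_of_nonneg hc.le]
  have h2 : 0 < ((j : ℝ) + 1) / 2 := by positivity
  calc _ ≤ cc (j + 1) / (((j : ℝ) + 1) / 2) := by gcongr
    _ = _ := by field_simp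

lemma analytic_id {z : ℂ} (hz : -(1 / 2 : ℝ) < z.re) :
    Complex.Gamma (z + 1) * Complex.Gamma (1 / 2) * (Complex.Gamma (z + 1 / 2))⁻¹
      = 1 + z * ∑' j : ℕ, (cc (j + 1) : ℂ) / (z + ((j : ℂ) + 1)) := by
  set U : Set ℂ := {z : ℂ | -(1 / 2 : ℝ) < z.re} with hU
  have hUo : IsOpen U := isOpen_lt continuous_const Complex.continuous_re
  have hUc : IsPreconnected U := (convex_halfSpace_re_gt _).isPreconnected
  have hS : DifferentiableOn ℂ
      (fun z : ℂ => ∑' j : ℕ, (cc (j + 1) : ℂ) / (z + ((j : ℂ) + 1))) U := by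
    refine Complex.differentiableOn_tsum_of_summable_norm (cc_summable.mul_left 2) ?_ hUo
      (fun j w hw => term_bound hw j)
    intro j w hw
    refine DifferentiableAt.differentiableWithinAt ?_
    refine DifferentiableAt.div (by fun_prop) (by fun_prop) ?_
    intro h
    have h1 := re_bound hw j
    rw [h] at h1
    have h2 : 0 < ((j : ℝ) + 1) / 2 := by positivity
    simp at h1
    linarith
  have hG : DifferentiableOn ℂ (fun z : ℂ =>
      Complex.Gamma (z + 1) * Complex.Gamma (1 / 2) * (Complex.Gamma (z + 1 / 2))⁻¹) U := by
    intro w hw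
    refine DifferentiableAt.differentiableWithinAt ?_
    refine DifferentiableAt.mul (DifferentiableAt.mul ?_ (by fun_prop)) ?_
    · refine DifferentiableAt.comp w (g := Complex.Gamma)
        (Complex.differentiableAt_Gamma _ ?_) (by fun_prop)
      intro m h
      have h' := congrArg Complex.re h
      have : (0 : ℝ) ≤ m := by positivity
      simp [hU] at h' hw
      linarith
    · exact DifferentiableAt.comp w (g := fun s => (Complex.Gamma s)⁻¹) (f := fun z => z + 1 / 2)
        Complex.differentiable_one_div_Gamma.differentiableAt (by fun_prop)
  have hH : DifferentiableOn ℂ (fun z : ℂ =>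
      1 + z * ∑' j : ℕ, (cc (j + 1) : ℂ) / (z + ((j : ℂ) + 1))) U :=
    (differentiableOn_const _).add (differentiableOn_id.mul hS)
  refine (hG.analyticOnNhd hUo).eqOn_of_preconnected_of_eventuallyEq (hH.analyticOnNhd hUo) hUc
    (z₀ := 1) (by simp [hU]; norm_num) ?_ hz
  have : ∀ᶠ w : ℂ in 𝓝 1, 0 < w.re :=
    (isOpen_lt continuous_const Complex.continuous_re).mem_nhds (by simp)
  filter_upwards [this] with w hw
  have hw0 : w ≠ 0 := by
    rintro rfl
    simp at hw
  have h1 := betaSeries hw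
  have h2 := Complex.betaIntegral_eq_Gamma_mul_div w (1 / 2) hw (by norm_num)
  have h3 := h1.tsum_eq
  rw [h1.summable.tsum_eq_zero_add, h2] at h3
  simp only [cc_zero, Nat.cast_zero, Nat.cast_add, Nat.cast_one, Complex.ofReal_one, add_zero] at h3
  rw [Complex.Gamma_add_one w hw0]
  rw [show w * Complex.Gamma w * Complex.Gamma (1 / 2) * (Complex.Gamma (w + 1 / 2))⁻¹
    = w * (Complex.Gamma w * Complex.Gamma (1 / 2) / Complex.Gamma (w + 1 / 2)) by ring, ← h3]
  field_simp

/-- the real series -/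
noncomputable def SS (x : ℝ) : ℝ := ∑' j : ℕ, cc (j + 1) / (x + ((j : ℝ) + 1))

lemma real_id {x : ℝ} (hx : -(1 / 2 : ℝ) < x) :
    Real.Gamma (x + 1) * Real.Gamma (1 / 2) / Real.Gamma (x + 1 / 2) = 1 + x * SS x := by
  have h := analytic_id (z := (x : ℂ)) (by simpa using hx)
  have e1 : (x : ℂ) + 1 = ((x + 1 : ℝ) : ℂ) := by push_cast; ring
  have e2 : (x : ℂ) + 1 / 2 = ((x + 1 / 2 : ℝ) : ℂ) := by push_cast; ring
  have e3 : (1 / 2 : ℂ) = ((1 / 2 : ℝ) : ℂ) := by push_cast; ring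
  have e4 : (∑' j : ℕ, (cc (j + 1) : ℂ) / ((x : ℂ) + ((j : ℂ) + 1))) = (SS x : ℂ) := by
    unfold SS
    push_cast
    rfl
  rw [e4, e1, e2, e3, Complex.Gamma_ofReal, Complex.Gamma_ofReal, Complex.Gamma_ofReal] at h
  rw [div_eq_mul_inv]
  exact_mod_cast h

/-- the coefficients -/
noncomputable def TT (n : ℕ) : ℝ := ∑' j : ℕ, cc (j + 1) / ((j : ℝ) + 1) ^ (n + 1)

lemma TT_summable (n : ℕ) : Summable (fun j : ℕ => cc (j + 1) / ((j : ℝ) + 1) ^ (n + 1)) := by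
  refine cc_summable.of_nonneg_of_le (fun j => ?_) (fun j => ?_)
  · have := cc_pos (j + 1)
    positivity
  · have := (cc_pos (j + 1)).le
    gcongr
    exact le_self_pow₀ (by linarith [(Nat.cast_nonneg j : (0 : ℝ) ≤ j)]) (by omega)

lemma SS_hasSum {x : ℝ} (hx : |x| < 1) :
    HasSum (fun n => x ^ n * ((-1) ^ n * TT n)) (SS x) := by
  set F : ℕ × ℕ → ℝ := fun p => cc (p.1 + 1) / ((p.1 : ℝ) + 1) ^ (p.2 + 1) * (-x) ^ p.2 with hF
  have hFs : Summable F := by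
    have h := cc_summable.mul_of_nonneg (summable_geometric_of_lt_one (abs_nonneg x) hx)
      (fun j => by
        have := cc_pos (j + 1)
        simp only [Pi.zero_apply]
        positivity)
      (fun n => by simp only [Pi.zero_apply]; positivity)
    refine Summable.of_norm_bounded h (fun p => ?_)
    have := (cc_pos (p.1 + 1)).le
    simp only [hF, norm_mul, norm_div, norm_pow, norm_neg, Real.norm_eq_abs, abs_of_nonneg this]
    have h1 : (1 : ℝ) ≤ p.1 + 1 := by linarith [(Nat.cast_nonneg p.1 : (0 : ℝ) ≤ p.1)]
    rw [abs_of_nonneg (by linarith : (0 : ℝ) ≤ p.1 + 1)]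
    gcongr
    exact le_self_pow₀ h1 (by omega)
  have h1 : ∀ j : ℕ, HasSum (fun n => F (j, n)) (cc (j + 1) / (x + ((j : ℝ) + 1))) := by
    intro j
    have hj : (1 : ℝ) ≤ j + 1 := by linarith [(Nat.cast_nonneg j : (0 : ℝ) ≤ j)]
    have hj0 : (0 : ℝ) < j + 1 := by linarith
    have hlt : ‖-x / ((j : ℝ) + 1)‖ < 1 := by
      rw [norm_div, norm_neg, Real.norm_eq_abs, Real.norm_of_nonneg hj0.le, div_lt_one hj0]
      linarith
    have g := (hasSum_geometric_of_norm_lt_one hlt).mul_left (cc (j + 1) / ((j : ℝ) + 1))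
    have hxp : x + ((j : ℝ) + 1) ≠ 0 := by
      have := (abs_lt.mp hx).1
      linarith
    refine (congrArg₂ HasSum ?_ ?_).mpr (g : HasSum _ _)
    · ext n
      simp only [hF, div_pow, pow_succ]
      field_simp
    · have : (1 - -x / ((j : ℝ) + 1)) = (x + (j + 1)) / (j + 1) := by
        field_simp
        ring
      rw [this]
      field_simp
  have h2 : HasSum F (SS x) := by
    have := hFs.hasSum.prod_fiberwise h1
    unfold SS
    rw [this.tsum_eq]
    exact hFs.hasSum
  have h3 := ((Equiv.prodComm ℕ ℕ).hasSum_iff.mpr h2).prod_fiberwise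
    (g := fun n => x ^ n * ((-1) ^ n * TT n)) (fun n => ?_)
  · exact h3
  · have := (TT_summable n).hasSum.mul_right ((-x) ^ n)
    refine (congrArg (HasSum _) ?_).mpr this
    rw [neg_pow]
    unfold TT
    ring

lemma SS_series : HasFPowerSeriesAt SS
    (FormalMultilinearSeries.ofScalars ℝ (fun n => (-1) ^ n * TT n)) 0 := by
  rw [hasFPowerSeriesAt_iff]
  have : ∀ᶠ x : ℝ in 𝓝 0, |x| < 1 :=
    (isOpen_lt continuous_abs continuous_const).mem_nhds (by simp)
  filter_upwards [this] with x hx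
  simpa using SS_hasSum hx

lemma SS_zero : SS 0 = 2 * Real.log 2 := by
  have hc : ContinuousAt SS 0 := SS_series.continuousAt
  have hd : HasDerivAt (fun x => 1 + x * SS x) (SS 0) 0 := by
    have hs : DifferentiableAt ℝ SS 0 := SS_series.differentiableAt
    have := ((hasDerivAt_id (0 : ℝ)).mul hs.hasDerivAt).const_add 1
    simpa using! this
  have hg : HasDerivAt (fun x : ℝ => Real.Gamma (x + 1) * Real.Gamma (1 / 2) /
      Real.Gamma (x + 1 / 2)) (2 * Real.log 2) 0 := by
    have a1 : HasDerivAt (fun x : ℝ => Real.Gamma (x + 1)) (-Real.eulerMascheroniConstant) 0 := by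
      have := Real.hasDerivAt_Gamma_one
      exact HasDerivAt.comp_add_const 0 1 (by simpa using this)
    have a2 : HasDerivAt (fun x : ℝ => Real.Gamma (x + 1 / 2))
        (-√Real.pi * (Real.eulerMascheroniConstant + 2 * Real.log 2)) 0 := by
      have := Real.hasDerivAt_Gamma_one_half
      exact HasDerivAt.comp_add_const 0 (1 / 2) (by simpa using this)
    have hp : √Real.pi ≠ 0 := by positivity
    have h := (a1.mul_const (Real.Gamma (1 / 2))).div a2
      (by rw [zero_add, Real.Gamma_one_half_eq]; exact hp)
    convert! h using 1
    rw [zero_add, zero_add, Real.Gamma_one_half_eq, Real.Gamma_one]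
    field_simp
    ring
  have he : (fun x : ℝ => Real.Gamma (x + 1) * Real.Gamma (1 / 2) /
      Real.Gamma (x + 1 / 2)) =ᶠ[𝓝 0] (fun x => 1 + x * SS x) := by
    have : ∀ᶠ x : ℝ in 𝓝 0, -(1 / 2 : ℝ) < x := lt_mem_nhds (by norm_num)
    filter_upwards [this] with x hx using real_id hx
  exact (hd.congr_of_eventuallyEq he).unique hg

lemma f_eq : f =ᶠ[𝓝 0] SS := by
  have : ∀ᶠ x : ℝ in 𝓝 0, -(1 / 2 : ℝ) < x := lt_mem_nhds (by norm_num)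
  filter_upwards [this] with x hx
  unfold f
  split_ifs with h
  · rw [h, SS_zero]
  · have h1 := real_id hx
    rw [Real.Gamma_add_one h] at h1
    unfold betaHalf
    have h2 : x * (Real.Gamma x * Real.Gamma (1 / 2) / Real.Gamma (x + 1 / 2)) = 1 + x * SS x := by
      rw [← h1]
      ring
    have h3 : Real.Gamma x * Real.Gamma (1 / 2) / Real.Gamma (x + 1 / 2) = (1 + x * SS x) / x := by
      rw [← h2]
      field_simp
    rw [h3]
    field_simp
    ring

lemma b_eq (n : ℕ) : b n = (-1) ^ n * TT n := by
  have h1 := SS_series.congr f_eq.symm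
  have h2 := h1.analyticAt.hasFPowerSeriesAt
  have h3 := h1.eq_formalMultilinearSeries h2
  have h4 := congrArg (fun p => p.coeff n) h3
  simp only [FormalMultilinearSeries.coeff_ofScalars] at h4
  rw [h4]
  unfold b
  ring

theorem laurent_coeff_beta_series (n : ℕ) :
    Summable (fun j : ℕ =>
      ((2 * (j + 1) - 1).choose (j + 1) : ℝ) / (2 ^ (2 * (j + 1) - 1) * (j + 1) ^ (n + 1))) ∧
    b n = (-1) ^ n * ∑' j : ℕ,
      ((2 * (j + 1) - 1).choose (j + 1) : ℝ) / (2 ^ (2 * (j + 1) - 1) * (j + 1) ^ (n + 1)) := by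
  have e : (fun j : ℕ =>
      ((2 * (j + 1) - 1).choose (j + 1) : ℝ) / (2 ^ (2 * (j + 1) - 1) * (j + 1) ^ (n + 1)))
      = fun j : ℕ => cc (j + 1) / ((j : ℝ) + 1) ^ (n + 1) := by
    ext j
    rw [← cc_eq, div_div]
  rw [e]
  exact ⟨TT_summable n, b_eq n⟩
end

section
/- The first Laurent coefficient of B(z,1/2) at z = 0 satisfies b_1 = f′(0) = 2·(log 2)² − π²/6. -/
open Filter Topology

lemma aux_taylor (φ φ' : ℝ → ℝ) (c : ℝ) (h1 : ∀ᶠ z in 𝓝 (0:ℝ), HasDerivAt φ (φ' z) z)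
    (h2 : HasDerivAt φ' c 0) :
    Tendsto (fun z => (φ z - φ 0 - φ' 0 * z) / z ^ 2) (𝓝[≠] 0) (𝓝 (c / 2)) := by
  have hc : ContinuousAt φ 0 := h1.self_of_nhds.continuousAt
  apply HasDerivAt.lhopital_zero_nhdsNE (f' := fun z => φ' z - φ' 0) (g' := fun z => 2 * z)
  · filter_upwards [eventually_nhdsWithin_of_eventually_nhds h1] with z hz
    have := (hz.sub_const (φ 0)).sub ((hasDerivAt_id z).const_mul (φ' 0))
    refine this.congr_deriv ?_
    ring
  · refine Eventually.of_forall fun z => ?_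
    simpa using hasDerivAt_pow 2 z
  · filter_upwards [self_mem_nhdsWithin] with z hz
    exact mul_ne_zero two_ne_zero hz
  · apply tendsto_nhdsWithin_of_tendsto_nhds
    have : ContinuousAt (fun z => φ z - φ 0 - φ' 0 * z) 0 := by fun_prop
    simpa [ContinuousAt] using this
  · apply tendsto_nhdsWithin_of_tendsto_nhds
    have : ContinuousAt (fun z : ℝ => z ^ 2) 0 := by fun_prop
    simpa [ContinuousAt] using this
  · have := (hasDerivAt_iff_tendsto_slope.1 h2).div_const 2
    refine this.congr' ?_
    filter_upwards [self_mem_nhdsWithin] with z hz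
    have hz' : z ≠ 0 := hz
    simp only [slope_def_field, sub_zero]
    field_simp

lemma aux_exp (h h' : ℝ → ℝ) (c : ℝ) (h0 : h 0 = 0)
    (h1 : ∀ᶠ z in 𝓝 (0:ℝ), HasDerivAt h (h' z) z)
    (h2 : HasDerivAt h' c 0) :
    Tendsto (fun z => (Real.exp (h z) - 1 - h' 0 * z) / z ^ 2) (𝓝[≠] 0)
      (𝓝 ((h' 0 ^ 2 + c) / 2)) := by
  have := aux_taylor (fun z => Real.exp (h z)) (fun z => Real.exp (h z) * h' z)
    (h' 0 ^ 2 + c) (h1.mono fun z hz => hz.exp) (by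
      have := h1.self_of_nhds.exp.mul h2
      refine this.congr_deriv ?_
      simp [h0]; ring)
  simpa [h0] using this

lemma aux_analytic : AnalyticAt ℝ Real.Gamma 1 := by
  have : AnalyticAt ℂ Complex.Gamma ((1:ℝ):ℂ) := by
    rw [Complex.analyticAt_iff_eventually_differentiableAt]
    have : ∀ᶠ z : ℂ in 𝓝 ((1:ℝ):ℂ), 0 < z.re := by
      apply (Complex.continuous_re.continuousAt).eventually
      exact lt_mem_nhds (by simp)
    filter_upwards [this] with z hz
    apply Complex.differentiableAt_Gamma
    intro m hm
    rw [hm] at hz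
    simp at hz
    have : (0:ℝ) ≤ m := m.cast_nonneg
    linarith
  exact this.re_ofReal

lemma aux_L : ∃ (L L' : ℝ → ℝ) (p : ℝ), L 0 = 0 ∧
    (∀ᶠ z in 𝓝 (0:ℝ), Real.exp (L z) = Real.Gamma (z + 1)) ∧
    (∀ᶠ z in 𝓝 (0:ℝ), HasDerivAt L (L' z) z) ∧ HasDerivAt L' p 0 := by
  have hA : AnalyticAt ℝ (fun z : ℝ => Real.log (Real.Gamma (z + 1))) 0 := by
    have h1 : AnalyticAt ℝ (fun z : ℝ => Real.Gamma (z + 1)) 0 := by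
      refine AnalyticAt.fun_comp (g := Real.Gamma) (f := fun z : ℝ => z + 1) ?_ (by fun_prop)
      simpa using aux_analytic
    exact h1.log (by simp)
  refine ⟨fun z : ℝ => Real.log (Real.Gamma (z + 1)), deriv (fun z : ℝ => Real.log (Real.Gamma (z + 1))), _, by simp, ?_, ?_,
    hA.deriv.differentiableAt.hasDerivAt⟩
  · filter_upwards [lt_mem_nhds (show (-1:ℝ) < 0 by norm_num)] with z hz
    exact Real.exp_log (Real.Gamma_pos_of_pos (by linarith))
  · filter_upwards [hA.eventually_analyticAt] with z hz
    exact hz.differentiableAt.hasDerivAt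

lemma aux_sinc : Tendsto (fun z : ℝ => (Real.sin (Real.pi * z) / (Real.pi * z) - 1) / z ^ 2)
    (𝓝[≠] 0) (𝓝 (-(Real.pi ^ 2 / 6))) := by
  have hpi := Real.pi_pos
  rw [tendsto_iff_norm_sub_tendsto_zero]
  have hlim : Tendsto (fun z : ℝ => Real.pi ^ 4 * |z| ^ 2 / 100) (𝓝[≠] 0) (𝓝 0) := by
    apply tendsto_nhdsWithin_of_tendsto_nhds
    have : ContinuousAt (fun z : ℝ => Real.pi ^ 4 * |z| ^ 2 / 100) 0 := by fun_prop
    simpa [ContinuousAt] using this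
  refine squeeze_zero' (Eventually.of_forall fun _ => norm_nonneg _) ?_ hlim
  have hs : ∀ᶠ z : ℝ in 𝓝 0, |Real.pi * z| < 1 := by
    have : ContinuousAt (fun z : ℝ => |Real.pi * z|) 0 := by fun_prop
    exact this.eventually (gt_mem_nhds (by simp))
  filter_upwards [self_mem_nhdsWithin, eventually_nhdsWithin_of_eventually_nhds hs] with z hz hz1
  have hz' : z ≠ 0 := hz
  have hb := Real.sin_bound hz1.le
  have e : (Real.sin (Real.pi * z) / (Real.pi * z) - 1) / z ^ 2 - -(Real.pi ^ 2 / 6)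
      = (Real.sin (Real.pi * z) - (Real.pi * z - (Real.pi * z) ^ 3 / 6)) / (Real.pi * z ^ 3) := by
    field_simp
    ring
  rw [e, Real.norm_eq_abs, abs_div, div_le_iff₀ (by positivity)]
  refine hb.trans (le_of_eq ?_)
  rw [abs_mul, abs_mul, abs_pow, abs_of_pos hpi]
  ring

lemma aux_double {L : ℝ → ℝ} {z : ℝ} (hz : z ≠ 0) (h1 : -(1/4) < z)
    (e1 : Real.exp (L z) = Real.Gamma (z + 1))
    (e2 : Real.exp (L (2 * z)) = Real.Gamma (2 * z + 1)) :
    betaHalf z * z = Real.exp (2 * L z - L (2 * z) + z * (2 * Real.log 2)) := by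
  have hd := Real.Gamma_mul_Gamma_add_half z
  have hG : Real.Gamma (z + 1/2) ≠ 0 := (Real.Gamma_pos_of_pos (by linarith)).ne'
  have hG2 : Real.Gamma (2 * z + 1) ≠ 0 := (Real.Gamma_pos_of_pos (by linarith)).ne'
  have hG1 : Real.Gamma (z + 1) ≠ 0 := (Real.Gamma_pos_of_pos (by linarith)).ne'
  have r1 := Real.Gamma_add_one hz
  have r2 := Real.Gamma_add_one (mul_ne_zero two_ne_zero hz)
  have e3 : (2:ℝ) ^ (1 - 2 * z) * Real.exp (z * (2 * Real.log 2)) = 2 := by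
    rw [Real.rpow_def_of_pos two_pos, ← Real.exp_add]
    rw [show Real.log 2 * (1 - 2 * z) + z * (2 * Real.log 2) = Real.log 2 by ring]
    exact Real.exp_log two_pos
  rw [Real.exp_add, Real.exp_sub, two_mul (L z), Real.exp_add, e1, e2]
  unfold betaHalf
  rw [Real.Gamma_one_half_eq, div_mul_eq_mul_div, div_mul_eq_mul_div, div_eq_div_iff hG hG2]
  rw [r2, r1]
  have hcalc : z * Real.Gamma z * (z * Real.Gamma z) * Real.exp (z * (2 * Real.log 2)) *
      Real.Gamma (z + 1/2) = z ^ 2 * Real.Gamma z * Real.exp (z * (2 * Real.log 2)) *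
      (Real.Gamma z * Real.Gamma (z + 1/2)) := by ring
  rw [hcalc, hd]
  linear_combination (-(z ^ 2 * Real.Gamma z * Real.Gamma (2 * z) * √Real.pi)) * e3

lemma aux_main : HasDerivAt f (2 * Real.log 2 ^ 2 - Real.pi ^ 2 / 6) 0 := by
  obtain ⟨L, L', p, L0, hL, hL1, hL2⟩ := aux_L
  have hneg : Tendsto (fun z : ℝ => -z) (𝓝 0) (𝓝 0) := by
    simpa using (continuous_neg (G := ℝ)).tendsto 0
  have htwo : Tendsto (fun z : ℝ => 2 * z) (𝓝 0) (𝓝 0) := by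
    simpa using (continuous_const_mul (2:ℝ)).tendsto 0
  -- value of p from the reflection formula
  have hp : p = Real.pi ^ 2 / 6 := by
    have h := aux_exp (fun z => -(L z + L (-z))) (fun z => -(L' z - L' (-z))) (-(2 * p))
      (by simp [L0]) (by
        filter_upwards [hL1, hneg.eventually hL1] with z h1 h2
        have := (h1.add (h2.comp z (hasDerivAt_neg z))).neg
        refine this.congr_deriv ?_
        ring) (by
        have h2 : HasDerivAt L' p (-0) := by simpa using hL2
        have := (hL2.sub (h2.comp 0 (hasDerivAt_neg 0))).neg
        refine this.congr_deriv ?_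
        ring)
    have h' := h.congr' (f₂ := fun z : ℝ =>
        (Real.sin (Real.pi * z) / (Real.pi * z) - 1) / z ^ 2) (by
      filter_upwards [self_mem_nhdsWithin, eventually_nhdsWithin_of_eventually_nhds hL,
        eventually_nhdsWithin_of_eventually_nhds (hneg.eventually hL)] with z hz e1 e2
      have hz' : z ≠ 0 := hz
      have hr := Real.Gamma_mul_Gamma_one_sub z
      have : Real.exp (-(L z + L (-z))) = Real.sin (Real.pi * z) / (Real.pi * z) := by
        rw [Real.exp_neg, Real.exp_add, e1, e2, Real.Gamma_add_one hz', neg_add_eq_sub,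
          mul_assoc, hr, ← mul_div_assoc, inv_div, mul_comm z]
      beta_reduce
      rw [this]
      simp)
    have := tendsto_nhds_unique h' aux_sinc
    simp at this
    linarith
  have h := aux_exp (fun z => 2 * L z - L (2 * z) + z * (2 * Real.log 2))
      (fun z => 2 * L' z - 2 * L' (2 * z) + 2 * Real.log 2) (-(2 * p))
      (by simp [L0]) (by
        filter_upwards [hL1, htwo.eventually hL1] with z h1 h2
        have := ((h1.const_mul 2).sub (h2.comp z ((hasDerivAt_id z).const_mul 2))).add
          ((hasDerivAt_id z).mul_const (2 * Real.log 2))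
        refine this.congr_deriv ?_
        ring) (by
        have h2 : HasDerivAt L' p (2 * 0) := by simpa using hL2
        have := ((hL2.const_mul 2).sub
          ((h2.comp 0 ((hasDerivAt_id 0).const_mul 2)).const_mul 2)).add_const (2 * Real.log 2)
        refine this.congr_deriv ?_
        ring)
  rw [hasDerivAt_iff_tendsto_slope]
  have hv : ((2 * L' 0 - 2 * L' (2 * 0) + 2 * Real.log 2) ^ 2 + -(2 * p)) / 2
      = 2 * Real.log 2 ^ 2 - Real.pi ^ 2 / 6 := by
    rw [hp, mul_zero]; ring
  rw [← hv]
  refine h.congr' ?_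
  filter_upwards [self_mem_nhdsWithin, eventually_nhdsWithin_of_eventually_nhds hL,
    eventually_nhdsWithin_of_eventually_nhds (htwo.eventually hL),
    eventually_nhdsWithin_of_eventually_nhds
      (lt_mem_nhds (show (-(1/4):ℝ) < 0 by norm_num))] with z hz e1 e2 h1
  have hz' : z ≠ 0 := hz
  rw [← aux_double hz' h1 e1 e2]
  simp only [slope_def_field, f, hz', if_true, if_false, sub_zero, mul_zero]
  field_simp
  ring

theorem laurent_coeff_beta_one :
    b 1 = deriv f 0 ∧ b 1 = 2 * Real.log 2 ^ 2 - Real.pi ^ 2 / 6 := by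
  have h : b 1 = deriv f 0 := by simp [b, iteratedDeriv_one]
  exact ⟨h, h.trans aux_main.deriv⟩
end
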